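/- Assume h convex, the control condition |d·h'(c·d)| ≤ K(h(d)+1) for |c−1| ≤ γ₀, and that t = 1 is the unique positive solution of Φ̂_{,1}(t,…,t) = 0. Fix ε ∈ (0,1). Then the punctured-ball functional Î_ε has a unique global minimizer r_ε over 𝒜_λ^ε. Moreover, there exists δ(ε) > 0 such that if λ > 1 − δ(ε), then r_ε ∈ C²([ε,1]), r_ε solves the modified equilibrium equation (d/dR)[R^{n−1} Φ̂_{,1}(r(R))] = (n−1) R^{n−2} Φ̂_{,2}(r(R)) on (ε,1), r_ε'(R) > 0 for all R ∈ [ε,1], r_ε(ε) > 0, and T̂(r_ε(ε)) = 0. -/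

import Mathlib

open Real MeasureTheory Filter Set
open scoped ENNReal NNReal

noncomputable section

/-- Radial stored energy `Φ(q, v, …, v) = (κ/n)(qⁿ + (n−1)vⁿ) + h(q v^{n−1})`,
the restriction of `Φ(v₁,…,vₙ) = (κ/n)(v₁ⁿ+⋯+vₙⁿ) + h(v₁⋯vₙ)` to points
`(q, v, …, v)`. -/
def Phi (n : ℕ) (κ : ℝ) (h : ℝ → ℝ) (q v : ℝ) : ℝ :=
  (κ / n) * (q ^ n + ((n : ℝ) - 1) * v ^ n) + h (q * v ^ (n - 1))

/-- `Φ_{,1}(q, v, …, v) = κ q^{n−1} + v^{n−1} h'(q v^{n−1})`. -/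
def Phi1 (n : ℕ) (κ : ℝ) (h' : ℝ → ℝ) (q v : ℝ) : ℝ :=
  κ * q ^ (n - 1) + v ^ (n - 1) * h' (q * v ^ (n - 1))

/-- `Φ_{,2}(q, v, …, v) = κ v^{n−1} + q v^{n−2} h'(q v^{n−1})`. -/
def Phi2 (n : ℕ) (κ : ℝ) (h' : ℝ → ℝ) (q v : ℝ) : ℝ :=
  κ * v ^ (n - 1) + q * v ^ (n - 2) * h' (q * v ^ (n - 1))

/-- Radial Cauchy stress `T(q,v) = v^{1−n} Φ_{,1}(q,v,…,v) = κ(q/v)^{n−1} + h'(q v^{n−1})`. -/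
def Tstress (n : ℕ) (κ : ℝ) (h' : ℝ → ℝ) (q v : ℝ) : ℝ :=
  κ * (q / v) ^ (n - 1) + h' (q * v ^ (n - 1))

/-- The determinant function `δ(R) = r'(R) (r(R)/R)^{n−1}`. -/
def del (n : ℕ) (r r' : ℝ → ℝ) (R : ℝ) : ℝ :=
  r' R * (r R / R) ^ (n - 1)

/-- Hypotheses on `h : (0,∞) → [0,∞)`: it is `C²` with derivative `h'` and second
derivative `h''`, `h'' > 0`, `h(d) → ∞` as `d → 0⁺`, `h(d)/d → ∞` as `d → ∞`,
`h'(d) → −∞` as `d → 0⁺` and `h'(d) → ∞` as `d → ∞`. -/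
structure GoodH (h h' h'' : ℝ → ℝ) : Prop where
  nonneg : ∀ d : ℝ, 0 < d → 0 ≤ h d
  deriv1 : ∀ d : ℝ, 0 < d → HasDerivAt h (h' d) d
  deriv2 : ∀ d : ℝ, 0 < d → HasDerivAt h' (h'' d) d
  cont2 : ContinuousOn h'' (Set.Ioi 0)
  hpp_pos : ∀ d : ℝ, 0 < d → 0 < h'' d
  lim_zero : Tendsto h (nhdsWithin 0 (Set.Ioi 0)) atTop
  lim_growth : Tendsto (fun d => h d / d) atTop atTop
  dlim_zero : Tendsto h' (nhdsWithin 0 (Set.Ioi 0)) atBot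
  dlim_top : Tendsto h' atTop atTop

/-- `r ∈ C²((0,1])`, with `r, r' > 0` on `(0,1]`, solving the radial equilibrium
equation `(d/dR)[R^{n−1} Φ_{,1}(r(R))] = (n−1) R^{n−2} Φ_{,2}(r(R))`. -/
structure RadialSol (n : ℕ) (κ : ℝ) (h' : ℝ → ℝ) (r r' r'' : ℝ → ℝ) : Prop where
  pos : ∀ R ∈ Set.Ioc (0:ℝ) 1, 0 < r R
  derivPos : ∀ R ∈ Set.Ioc (0:ℝ) 1, 0 < r' R
  hasDeriv : ∀ R ∈ Set.Ioc (0:ℝ) 1, HasDerivWithinAt r (r' R) (Set.Ioc 0 1) R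
  hasDeriv2 : ∀ R ∈ Set.Ioc (0:ℝ) 1, HasDerivWithinAt r' (r'' R) (Set.Ioc 0 1) R
  cont2 : ContinuousOn r'' (Set.Ioc 0 1)
  equil : ∀ R ∈ Set.Ioc (0:ℝ) 1,
    HasDerivWithinAt (fun s => s ^ (n - 1) * Phi1 n κ h' (r' s) (r s / s))
      (((n : ℝ) - 1) * R ^ (n - 2) * Phi2 n κ h' (r' R) (r R / R)) (Set.Ioc 0 1) R


/-- Modified radial stored energy
`Φ̂(q,v,…,v) = (κ/n)qⁿ + h(q v^{n−1}) + κ q v^{n−1}((n−1)/n + ln(v^{n−1}))`. -/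
def PhiHat (n : ℕ) (κ : ℝ) (h : ℝ → ℝ) (q v : ℝ) : ℝ :=
  (κ / n) * q ^ n + h (q * v ^ (n - 1)) +
    κ * (q * v ^ (n - 1)) * (((n : ℝ) - 1) / n + ((n : ℝ) - 1) * Real.log v)

/-- `Φ̂_{,1}(q,v,…,v) = κ q^{n−1} + v^{n−1} h'(q v^{n−1}) + κ v^{n−1}((n−1)/n + (n−1) ln v)`. -/
def PhiHat1 (n : ℕ) (κ : ℝ) (h' : ℝ → ℝ) (q v : ℝ) : ℝ :=
  κ * q ^ (n - 1) + v ^ (n - 1) * h' (q * v ^ (n - 1)) +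
    κ * v ^ (n - 1) * (((n : ℝ) - 1) / n + ((n : ℝ) - 1) * Real.log v)

/-- `Φ̂_{,2}(q,v,…,v) = q v^{n−2}(h'(q v^{n−1}) + κ + κ(n−1)(1/n + ln v))`. -/
def PhiHat2 (n : ℕ) (κ : ℝ) (h' : ℝ → ℝ) (q v : ℝ) : ℝ :=
  q * v ^ (n - 2) *
    (h' (q * v ^ (n - 1)) + κ + κ * (((n : ℝ) - 1) * (1 / n + Real.log v)))

/-- Modified radial Cauchy stress
`T̂(q,v) = κ(q/v)^{n−1} + h'(q v^{n−1}) + (n−1)κ(1/n + ln v)`. -/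
def THat (n : ℕ) (κ : ℝ) (h' : ℝ → ℝ) (q v : ℝ) : ℝ :=
  κ * (q / v) ^ (n - 1) + h' (q * v ^ (n - 1)) +
    ((n : ℝ) - 1) * κ * (1 / n + Real.log v)

/-- `r ∈ C²((0,1])`, with `r, r' > 0` on `(0,1]`, solving the modified radial
equilibrium equation `(d/dR)[R^{n−1} Φ̂_{,1}(r(R))] = (n−1) R^{n−2} Φ̂_{,2}(r(R))`. -/
structure ModRadialSol (n : ℕ) (κ : ℝ) (h' : ℝ → ℝ) (r r' r'' : ℝ → ℝ) : Prop where
  pos : ∀ R ∈ Set.Ioc (0:ℝ) 1, 0 < r R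
  derivPos : ∀ R ∈ Set.Ioc (0:ℝ) 1, 0 < r' R
  hasDeriv : ∀ R ∈ Set.Ioc (0:ℝ) 1, HasDerivWithinAt r (r' R) (Set.Ioc 0 1) R
  hasDeriv2 : ∀ R ∈ Set.Ioc (0:ℝ) 1, HasDerivWithinAt r' (r'' R) (Set.Ioc 0 1) R
  cont2 : ContinuousOn r'' (Set.Ioc 0 1)
  equil : ∀ R ∈ Set.Ioc (0:ℝ) 1,
    HasDerivWithinAt (fun s => s ^ (n - 1) * PhiHat1 n κ h' (r' s) (r s / s))
      (((n : ℝ) - 1) * R ^ (n - 2) * PhiHat2 n κ h' (r' R) (r R / R)) (Set.Ioc 0 1) R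


/-- The admissible set `𝒜_λ^ε` over the punctured ball: `r ∈ W^{1,1}(ε,1)`,
`r(1) = λ`, `r' > 0` a.e. in `(ε,1)` and `r(ε) ≥ 0`. -/
structure AdmE (ε lam : ℝ) (r r' : ℝ → ℝ) : Prop where
  intg : IntegrableOn r' (Set.Ioc ε 1)
  ftc : ∀ R ∈ Set.Icc ε 1, r R = r ε + ∫ t in Set.Ioc ε R, r' t
  derivPos : ∀ᵐ R ∂(volume.restrict (Set.Ioc ε 1)), 0 < r' R
  bc : r 1 = lam
  c0 : 0 ≤ r ε

/-- The punctured-ball modified energy functional `Î_ε`, valued in `EReal`. -/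
def IHatEps (n : ℕ) (κ ε lam : ℝ) (h : ℝ → ℝ) (r r' : ℝ → ℝ) : EReal :=
  (((∫⁻ R in Set.Ioc ε 1,
      ENNReal.ofReal (R ^ (n - 1) * PhiHat n κ h (r' R) (r R / R))) : ℝ≥0∞) : EReal)
  - (((∫⁻ R in Set.Ioc ε 1,
      ENNReal.ofReal (-(R ^ (n - 1) * PhiHat n κ h (r' R) (r R / R)))) : ℝ≥0∞) : EReal)
  - ((κ * ((n : ℝ) - 1) / n * lam ^ n * Real.log lam : ℝ) : EReal)

section Stress

/-- The convex part `κ pⁿ⁻¹ + h'(p eⁿʷ)` of the modified Cauchy stress, in terms of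
`p = R r'/r` and `w = ln (r/R)`. -/
def stressC (n : ℕ) (κ : ℝ) (h' : ℝ → ℝ) (p w : ℝ) : ℝ :=
  κ * p ^ (n - 1) + h' (p * exp (n * w))

variable {n : ℕ} {κ : ℝ} {h h' h'' : ℝ → ℝ}

lemma GoodH.deriv_strictMonoOn (hh : GoodH h h' h'') : StrictMonoOn h' (Ioi 0) := by
  refine strictMonoOn_of_deriv_pos (convex_Ioi 0)
    (fun x hx => (hh.deriv2 x hx).continuousAt.continuousWithinAt) fun x hx => ?_
  rw [interior_Ioi] at hx
  rw [(hh.deriv2 x hx).deriv]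
  exact hh.hpp_pos x hx

lemma GoodH.continuousOn_deriv (hh : GoodH h h' h'') : ContinuousOn h' (Ioi 0) :=
  fun x hx => (hh.deriv2 x hx).continuousAt.continuousWithinAt

lemma stressC_strictMono (hκ : 0 < κ) (hh : GoodH h h' h'') {p₁ p₂ w₁ w₂ : ℝ} (h₁ : 0 < p₁)
    (hp : p₁ < p₂) (hw : w₁ ≤ w₂) : stressC n κ h' p₁ w₁ < stressC n κ h' p₂ w₂ := by
  have h2 : 0 < p₂ := h₁.trans hp
  have a : p₁ ^ (n - 1) ≤ p₂ ^ (n - 1) := by gcongr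
  have b : p₁ * exp (n * w₁) < p₂ * exp (n * w₂) := by
    have : exp (n * w₁) ≤ exp (n * w₂) := by gcongr
    nlinarith [exp_pos (n * w₁)]
  have c := hh.deriv_strictMonoOn (mem_Ioi.2 (by positivity)) (mem_Ioi.2 (by positivity)) b
  unfold stressC
  nlinarith

lemma stressC_mono (hκ : 0 < κ) (hh : GoodH h h' h'') {p₁ p₂ w₁ w₂ : ℝ} (h₁ : 0 < p₁)
    (hp : p₁ ≤ p₂) (hw : w₁ ≤ w₂) : stressC n κ h' p₁ w₁ ≤ stressC n κ h' p₂ w₂ := by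
  have h2 : 0 < p₂ := h₁.trans_le hp
  have a : p₁ ^ (n - 1) ≤ p₂ ^ (n - 1) := by gcongr
  have b : p₁ * exp (n * w₁) ≤ p₂ * exp (n * w₂) := by gcongr
  have c := hh.deriv_strictMonoOn.monotoneOn (mem_Ioi.2 (by positivity))
    (mem_Ioi.2 (by positivity)) b
  unfold stressC
  nlinarith

lemma lt_of_stressC_lt (hκ : 0 < κ) (hh : GoodH h h' h'') {p₁ p₂ w : ℝ} (h₂ : 0 < p₂)
    (hlt : stressC n κ h' p₁ w < stressC n κ h' p₂ w) : p₁ < p₂ := by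
  by_contra! hc
  exact absurd (stressC_mono hκ hh h₂ hc le_rfl) (not_le.2 hlt)

lemma stressC_continuousAt (hh : GoodH h h' h'') {p w : ℝ} (hp : 0 < p) :
    ContinuousAt (fun z : ℝ × ℝ => stressC n κ h' z.1 z.2) (p, w) := by
  unfold stressC
  refine ContinuousAt.add (by fun_prop) ?_
  have h1 : ContinuousAt h' (p * exp (n * w)) :=
    (hh.deriv2 _ (by positivity)).continuousAt
  exact ContinuousAt.comp (f := fun z : ℝ × ℝ => z.1 * exp (n * z.2)) h1 (by fun_prop)

/-- For every stress level and every `w` there is a unique matching `p > 0`; this is existence. -/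
lemma exists_stressC_eq (hκ : 0 < κ) (hh : GoodH h h' h'') (q w : ℝ) :
    ∃ p, 0 < p ∧ stressC n κ h' p w = q := by
  have e0 : 0 < exp (n * w) := exp_pos _
  have hcont : ContinuousOn (fun p => stressC n κ h' p w) (Ioi 0) := fun p hp =>
    (ContinuousAt.comp (f := fun p : ℝ => (p, w)) (stressC_continuousAt hh hp)
      (by fun_prop)).continuousWithinAt
  obtain ⟨p₁, hp₁, hq₁⟩ : ∃ p, 0 < p ∧ stressC n κ h' p w ≤ q := by
    have t1 : Tendsto (fun p : ℝ => p * exp (n * w)) (nhdsWithin 0 (Ioi 0))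
        (nhdsWithin 0 (Ioi 0)) := by
      refine tendsto_nhdsWithin_iff.2 ⟨?_, ?_⟩
      · have : Tendsto (fun p : ℝ => p * exp (n * w)) (nhds 0) (nhds (0 * exp (n * w))) :=
          tendsto_id.mul_const _
        rw [zero_mul] at this
        exact this.mono_left nhdsWithin_le_nhds
      · filter_upwards [self_mem_nhdsWithin] with p hp
        exact mul_pos hp e0
    have t2 := (hh.dlim_zero.comp t1).eventually (eventually_le_atBot (q - κ))
    have t3 : ∀ᶠ p : ℝ in nhdsWithin 0 (Ioi 0), p ∈ Ioc (0 : ℝ) 1 :=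
      Ioc_mem_nhdsGT one_pos
    obtain ⟨p, h1, h2⟩ := (t2.and t3).exists
    refine ⟨p, h2.1, ?_⟩
    have : p ^ (n - 1) ≤ 1 := pow_le_one₀ h2.1.le h2.2
    simp only [Function.comp_apply] at h1
    unfold stressC
    nlinarith
  obtain ⟨p₂, hp₂, hq₂⟩ : ∃ p, 0 < p ∧ q ≤ stressC n κ h' p w := by
    have t1 : Tendsto (fun p : ℝ => p * exp (n * w)) atTop atTop :=
      tendsto_id.atTop_mul_const e0
    have t2 := (hh.dlim_top.comp t1).eventually (eventually_ge_atTop q)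
    obtain ⟨p, h1, h2⟩ := (t2.and (eventually_gt_atTop 0)).exists
    refine ⟨p, h2, ?_⟩
    simp only [Function.comp_apply] at h1
    unfold stressC
    have : 0 ≤ κ * p ^ (n - 1) := by positivity
    linarith
  obtain ⟨p, hp, h⟩ := isPreconnected_Ioi.intermediate_value (mem_Ioi.2 hp₁) (mem_Ioi.2 hp₂) hcont
    (show q ∈ Icc _ _ from ⟨hq₁, hq₂⟩)
  exact ⟨p, hp, h⟩

lemma continuousOn_of_stressC_eq (hκ : 0 < κ) (hh : GoodH h h' h'')
    {p w q : ℝ → ℝ} {S : Set ℝ} (hw : ContinuousOn w S) (hq : ContinuousOn q S)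
    (hp : ∀ s ∈ S, 0 < p s) (heq : ∀ s ∈ S, stressC n κ h' (p s) (w s) = q s) :
    ContinuousOn p S := by
  have key : ∀ s ∈ S, ∀ a, 0 < a → ContinuousWithinAt (fun t => stressC n κ h' a (w t)) S s := by
    intro s hs a ha
    exact ContinuousAt.comp_continuousWithinAt (f := fun t => (a, w t))
      (stressC_continuousAt (n := n) (κ := κ) hh ha) (continuousWithinAt_const.prodMk (hw s hs))
  intro s hs
  refine tendsto_order.2 ⟨fun a ha => ?_, fun a ha => ?_⟩
  · rcases le_or_gt a 0 with h0 | h0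
    · filter_upwards [self_mem_nhdsWithin] with t ht using h0.trans_lt (hp t ht)
    · have h1 := stressC_strictMono (n := n) hκ hh h0 ha (le_refl (w s))
      rw [heq s hs] at h1
      filter_upwards [(key s hs a h0).eventually_lt (hq s hs) h1, self_mem_nhdsWithin] with t ht hts
      rw [← heq t hts] at ht
      exact lt_of_stressC_lt hκ hh (hp t hts) ht
  · have h0 : 0 < a := (hp s hs).trans ha
    have h1 := stressC_strictMono (n := n) hκ hh (hp s hs) ha (le_refl (w s))
    rw [heq s hs] at h1
    filter_upwards [(hq s hs).eventually_lt (key s hs a h0) h1, self_mem_nhdsWithin] with t ht hts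
    rw [← heq t hts] at ht
    exact lt_of_stressC_lt hκ hh h0 ht

lemma hasDerivWithinAt_of_stressC_eq (hκ : 0 < κ) (hh : GoodH h h' h'')
    {p w q : ℝ → ℝ} {S : Set ℝ} {s w' q' : ℝ} (hs : s ∈ S) (hpc : ContinuousWithinAt p S s)
    (hw : HasDerivWithinAt w w' S s) (hq : HasDerivWithinAt q q' S s)
    (hp : ∀ s ∈ S, 0 < p s) (heq : ∀ s ∈ S, stressC n κ h' (p s) (w s) = q s) :
    HasDerivWithinAt p
      ((q' - h'' (p s * exp (n * w s)) * (p s * (exp (n * w s) * (n * w')))) /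
        (κ * (((n - 1 : ℕ) : ℝ) * p s ^ (n - 1 - 1)) +
          h'' (p s * exp (n * w s)) * exp (n * w s))) S s := by
  set H : ℝ → ℝ := fun t => dslope h' (p s * exp (n * w s)) (p t * exp (n * w t)) with hH
  set A : ℝ → ℝ := fun t => dslope (fun x : ℝ => x ^ (n - 1)) (p s) (p t) with hA
  have hps := hp s hs
  have hδ : 0 < p s * exp (n * w s) := by positivity
  have he : HasDerivWithinAt (fun t => exp (n * w t)) (exp (n * w s) * (n * w')) S s :=
    (hw.const_mul (n : ℝ)).exp
  have hHc : ContinuousWithinAt H S s := by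
    refine ContinuousAt.comp_continuousWithinAt (f := fun t => p t * exp (n * w t)) ?_
      (hpc.mul he.continuousWithinAt)
    exact continuousAt_dslope_same.2 (hh.deriv2 _ hδ).differentiableAt
  have hHs : H s = h'' (p s * exp (n * w s)) := by
    simp only [hH, dslope_same]; exact (hh.deriv2 _ hδ).deriv
  have hAc : ContinuousWithinAt A S s := by
    refine ContinuousAt.comp_continuousWithinAt (f := p) ?_ hpc
    exact continuousAt_dslope_same.2 (by fun_prop)
  have hAs : A s = ((n - 1 : ℕ) : ℝ) * p s ^ (n - 1 - 1) := by
    simp [hA, dslope_same]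
  set M : ℝ → ℝ := fun t => κ * A t + H t * exp (n * w t) with hM
  have hMc : ContinuousWithinAt M S s :=
    (continuousWithinAt_const.mul hAc).add (hHc.mul he.continuousWithinAt)
  have hMs : 0 < M s := by
    have := hh.hpp_pos _ hδ
    simp only [hM, hAs, hHs]; positivity
  have hid : ∀ t ∈ S, (p t - p s) * M t =
      (q t - q s) - H t * (p s * (exp (n * w t) - exp (n * w s))) := by
    intro t ht
    rw [← heq t ht, ← heq s hs]
    have e1 := sub_smul_dslope h' (p s * exp (n * w s)) (p t * exp (n * w t))
    have e2 := sub_smul_dslope (fun x : ℝ => x ^ (n - 1)) (p s) (p t)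
    simp only [smul_eq_mul] at e1 e2
    simp only [hM, hA, hH, stressC]
    linear_combination κ * e2 + e1
  rw [hasDerivWithinAt_iff_tendsto_slope] at he hq ⊢
  have hsub : nhdsWithin s (S \ {s}) ≤ nhdsWithin s S := nhdsWithin_mono _ sdiff_subset
  have hMt := hMc.tendsto.mono_left hsub
  have hHt := hHc.tendsto.mono_left hsub
  rw [hHs] at hHt
  have hlim := ((hq.sub (hHt.mul (he.const_mul (p s)))).div hMt hMs.ne')
  have : M s = κ * (((n - 1 : ℕ) : ℝ) * p s ^ (n - 1 - 1)) +
          h'' (p s * exp (n * w s)) * exp (n * w s) := by simp only [hM, hAs, hHs]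
  rw [this] at hlim
  refine hlim.congr' ?_
  filter_upwards [hMt.eventually (lt_mem_nhds hMs), self_mem_nhdsWithin] with t hMpos htS
  have h1 := hid t htS.1
  have hne : t - s ≠ 0 := sub_ne_zero.2 htS.2
  simp only [slope, vsub_eq_sub, smul_eq_mul, Pi.div_apply]
  rw [div_eq_iff hMpos.ne']
  have : (t - s)⁻¹ * (p t - p s) * M t = (t - s)⁻¹ * ((p t - p s) * M t) := by ring
  rw [this, h1]; ring

/-- Monotonicity and Lipschitz bounds for the stress, uniform on boxes. -/
lemma exists_stressC_bound (hκ : 0 < κ) (hh : GoodH h h' h'') {a b W : ℝ} (ha : 0 < a) :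
    ∃ m M : ℝ, 0 < m ∧ 0 ≤ M ∧ ∀ p₁ p₂ w₁ w₂ : ℝ, a ≤ p₁ → p₁ ≤ p₂ → p₂ ≤ b →
      |w₁| ≤ W → |w₂| ≤ W →
      m * (p₂ - p₁) - M * |w₂ - w₁| ≤ stressC n κ h' p₂ w₂ - stressC n κ h' p₁ w₁ := by
  set lo := a * exp (-(n * W)) with hlo
  set hi := b * exp (n * W) with hhi
  have hlo0 : 0 < lo := by positivity
  have hmem : ∀ p w : ℝ, a ≤ p → p ≤ b → |w| ≤ W → p * exp (n * w) ∈ Icc lo hi := by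
    intro p w h1 h2 h3
    have h4 := abs_le.1 h3
    have hp : 0 < p := ha.trans_le h1
    constructor
    · have : exp (-(n * W)) ≤ exp (n * w) := by
        apply exp_le_exp.2; nlinarith [n.cast_nonneg (α := ℝ)]
      simp only [hlo]; gcongr
    · have hb : 0 ≤ b := hp.le.trans h2
      simp only [hhi]; gcongr; exact h4.2
  have hsub : Icc lo hi ⊆ Ioi 0 := fun x hx => hlo0.trans_le hx.1
  have hc : ContinuousOn h'' (Icc lo hi) := hh.cont2.mono hsub
  by_cases hne : (Icc lo hi).Nonempty
  swap
  · refine ⟨1, 0, one_pos, le_rfl, fun p₁ p₂ w₁ w₂ h1 h2 h3 h4 h5 => ?_⟩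
    exact (hne ⟨_, hmem p₁ w₁ h1 (h2.trans h3) h4⟩).elim
  obtain ⟨x, hx, hmin⟩ := isCompact_Icc.exists_isMinOn hne hc
  obtain ⟨y, hy, hmax⟩ := isCompact_Icc.exists_isMaxOn hne hc
  have hx0 := hh.hpp_pos x (hsub hx)
  have hy0 := hh.hpp_pos y (hsub hy)
  have hhi0 : 0 < hi := hlo0.trans_le (hx.1.trans hx.2)
  refine ⟨h'' x * exp (-(n * W)), h'' y * (hi * n), by positivity, by positivity,
    fun p₁ p₂ w₁ w₂ h1 h2 h3 h4 h5 => ?_⟩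
  have hp1 : 0 < p₁ := ha.trans_le h1
  have hp2 : 0 < p₂ := hp1.trans_le h2
  have s1 : h'' x * exp (-(n * W)) * (p₂ - p₁) ≤
      h' (p₂ * exp (n * w₂)) - h' (p₁ * exp (n * w₂)) := by
    have := (convex_Icc lo hi).mul_sub_le_image_sub_of_le_deriv (f := h')
      (hh.continuousOn_deriv.mono hsub)
      (fun z hz =>
        (hh.deriv2 z (hsub (interior_subset hz))).differentiableAt.differentiableWithinAt)
      (C := h'' x)
      (fun z hz => by
        rw [(hh.deriv2 z (hsub (interior_subset hz))).deriv]
        exact hmin (interior_subset hz))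
      _ (hmem p₁ w₂ h1 (h2.trans h3) h5) _ (hmem p₂ w₂ (h1.trans h2) h3 h5) (by gcongr)
    refine le_trans ?_ this
    have e : exp (-(n * W)) ≤ exp (n * w₂) := by
      apply exp_le_exp.2; nlinarith [n.cast_nonneg (α := ℝ), (abs_le.1 h5).1]
    rw [← sub_mul, mul_assoc, mul_comm (p₂ - p₁)]
    gcongr
  have s2 : |h' (p₁ * exp (n * w₂)) - h' (p₁ * exp (n * w₁))| ≤ h'' y * (hi * n) * |w₂ - w₁| := by
    have := (convex_Icc (-W) W).norm_image_sub_le_of_norm_hasDerivWithin_le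
      (f := fun w => h' (p₁ * exp (n * w)))
      (f' := fun w => h'' (p₁ * exp (n * w)) * (p₁ * (exp (n * w) * n)))
      (C := h'' y * (hi * n))
      (fun w hw => by
        have hw' : |w| ≤ W := abs_le.2 hw
        have hm := hmem p₁ w h1 (h2.trans h3) hw'
        have h6 : HasDerivAt (fun w : ℝ => p₁ * exp (n * w)) (p₁ * (exp (n * w) * n)) w := by
          have := (((hasDerivAt_id w).const_mul (n : ℝ)).exp).const_mul p₁
          simpa using this
        exact (HasDerivAt.comp w (hh.deriv2 _ (hsub hm)) h6).hasDerivWithinAt)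
      (fun w hw => by
        have hw' : |w| ≤ W := abs_le.2 hw
        have hm := hmem p₁ w h1 (h2.trans h3) hw'
        have h7 := hh.hpp_pos _ (hsub hm)
        rw [Real.norm_of_nonneg (by positivity), ← mul_assoc p₁]
        gcongr
        · exact hmax hm
        · exact hm.2)
      (abs_le.1 h4) (abs_le.1 h5)
    simpa [Real.norm_eq_abs] using this
  have s3 : p₁ ^ (n - 1) ≤ p₂ ^ (n - 1) := by gcongr
  have s4 := (abs_le.1 s2).1
  unfold stressC
  nlinarith

end Stress

section Polar

variable {n : ℕ} {κ : ℝ} {h h' h'' : ℝ → ℝ}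

lemma monotoneOn_Icc_of_hasDerivWithinAt {f f' : ℝ → ℝ} {a b : ℝ}
    (hf : ∀ s ∈ Icc a b, HasDerivWithinAt f (f' s) (Icc a b) s)
    (h0 : ∀ s ∈ Icc a b, 0 ≤ f' s) : MonotoneOn f (Icc a b) :=
  monotoneOn_of_hasDerivWithinAt_nonneg (convex_Icc a b)
    (fun s hs => (hf s hs).continuousWithinAt)
    (fun s hs => (hf s (interior_subset hs)).mono interior_subset)
    (fun s hs => h0 s (interior_subset hs))

lemma strictMonoOn_Icc_of_hasDerivWithinAt {f f' : ℝ → ℝ} {a b : ℝ}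
    (hf : ∀ s ∈ Icc a b, HasDerivWithinAt f (f' s) (Icc a b) s)
    (h0 : ∀ s ∈ Icc a b, 0 < f' s) : StrictMonoOn f (Icc a b) :=
  strictMonoOn_of_hasDerivWithinAt_pos (convex_Icc a b)
    (fun s hs => (hf s hs).continuousWithinAt)
    (fun s hs => (hf s (interior_subset hs)).mono interior_subset)
    (fun s hs => h0 s (interior_subset hs))

/-- A function with `f f' ≤ 0` starting nonnegative stays between `0` and its initial value. -/
lemma mem_Icc_of_mul_deriv_nonpos {f f' : ℝ → ℝ} {L : ℝ}
    (hf : ∀ s ∈ Icc 0 L, HasDerivWithinAt f (f' s) (Icc 0 L) s)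
    (hle : ∀ s ∈ Icc 0 L, f s * f' s ≤ 0) (h0 : 0 ≤ f 0) :
    ∀ s ∈ Icc 0 L, f s ∈ Icc 0 (f 0) := by
  have hmono : MonotoneOn (fun s => -(f s ^ 2)) (Icc 0 L) :=
    monotoneOn_Icc_of_hasDerivWithinAt (f' := fun s => -(2 * (f s * f' s)))
      (fun s hs => by
        have := ((hf s hs).pow 2).neg
        refine this.congr_deriv ?_
        simp; ring)
      (fun s hs => by have := hle s hs; linarith)
  have hc : ContinuousOn f (Icc 0 L) := fun s hs => (hf s hs).continuousWithinAt
  intro s hs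
  have h1 : (0 : ℝ) ∈ Icc 0 L := ⟨le_rfl, hs.1.trans hs.2⟩
  have hsq := hmono h1 hs hs.1
  simp only [neg_le_neg_iff] at hsq
  refine ⟨?_, abs_le_of_sq_le_sq' hsq h0 |>.2⟩
  by_contra! hneg
  obtain ⟨t, ht, hft⟩ := intermediate_value_Icc' hs.1
    (hc.mono (Icc_subset_Icc_right hs.2)) (show (0 : ℝ) ∈ Icc (f s) (f 0) from ⟨hneg.le, h0⟩)
  have := hmono ⟨ht.1, ht.2.trans hs.2⟩ hs ht.2
  simp only [hft] at this
  nlinarith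

/-- The vector field of the equilibrium system in the unknowns `(q, w)`, as a function of `p`. -/
def polarField (n : ℕ) (κ p : ℝ) : ℝ × ℝ := (κ * ((n : ℝ) - 1) * (1 - p ^ n), p - 1)

lemma norm_polarField_sub_le (hn : 2 ≤ n) (hκ : 0 < κ) {b p₁ p₂ : ℝ} (h₁ : 0 ≤ p₁) (h₂ : 0 ≤ p₂)
    (hb₁ : p₁ ≤ b) (hb₂ : p₂ ≤ b) :
    ‖polarField n κ p₁ - polarField n κ p₂‖ ≤
      (κ * ((n : ℝ) - 1) * (n * b ^ (n - 1)) + 1) * |p₁ - p₂| := by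
  have hn' : (2 : ℝ) ≤ n := by exact_mod_cast hn
  have hb : 0 ≤ b := h₁.trans hb₁
  have hc : 0 ≤ κ * ((n : ℝ) - 1) := by
    have : (0:ℝ) ≤ (n : ℝ) - 1 := by linarith
    positivity
  have key : |p₁ ^ n - p₂ ^ n| ≤ n * b ^ (n - 1) * |p₁ - p₂| := by
    have := abs_pow_sub_pow_le p₁ p₂ n
    refine this.trans ?_
    rw [mul_comm |p₁ - p₂|, mul_right_comm]
    have : max |p₁| |p₂| ≤ b := by simp [abs_of_nonneg, *]
    gcongr
  refine max_le ?_ ?_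
  · simp only [polarField, Prod.fst_sub, Real.norm_eq_abs]
    rw [← mul_sub, abs_mul, abs_of_nonneg hc]
    have : |1 - p₁ ^ n - (1 - p₂ ^ n)| = |p₁ ^ n - p₂ ^ n| := by
      rw [abs_sub_comm]; congr 1; ring
    rw [this]
    nlinarith [abs_nonneg (p₁ - p₂)]
  · simp only [polarField, Prod.snd_sub, Real.norm_eq_abs]
    have : |p₁ - 1 - (p₂ - 1)| = |p₁ - p₂| := by congr 1; ring
    rw [this]
    have : 0 ≤ κ * ((n : ℝ) - 1) * (n * b ^ (n - 1)) * |p₁ - p₂| := by positivity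
    linarith

/-- Solutions of the modified equilibrium equation in the coordinates `s = ln (R/ε)`,
`w = ln (r/R)`, `p = R r'/r`. -/
structure PolarSol (n : ℕ) (κ : ℝ) (h' : ℝ → ℝ) (L : ℝ) (w p : ℝ → ℝ) : Prop where
  pos : ∀ s ∈ Icc 0 L, 0 < p s
  hasDeriv_w : ∀ s ∈ Icc 0 L, HasDerivWithinAt w (p s - 1) (Icc 0 L) s
  hasDeriv_q : ∀ s ∈ Icc 0 L, HasDerivWithinAt (fun s => stressC n κ h' (p s) (w s))
    (κ * ((n : ℝ) - 1) * (1 - p s ^ n)) (Icc 0 L) s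

/-- The sign relation that keeps `p` between `1` and its initial value. -/
lemma sub_one_mul_deriv_nonpos (hn : 2 ≤ n) (hκ : 0 < κ) (hh : GoodH h h' h'') {p pt w : ℝ}
    (hp : 0 < p) (hpt : 0 < pt) (hsgn : 0 ≤ (p - 1) * (pt - 1)) :
    (p - 1) * ((κ * ((n : ℝ) - 1) * (1 - pt ^ n) -
      h'' (p * exp (n * w)) * (p * (exp (n * w) * (n * (pt - 1))))) /
        (κ * (((n - 1 : ℕ) : ℝ) * p ^ (n - 1 - 1)) + h'' (p * exp (n * w)) * exp (n * w))) ≤ 0 := by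
  have hn' : (2 : ℝ) ≤ n := by exact_mod_cast hn
  have hpp := hh.hpp_pos (p * exp (n * w)) (by positivity)
  have hden : 0 < κ * (((n - 1 : ℕ) : ℝ) * p ^ (n - 1 - 1)) +
    h'' (p * exp (n * w)) * exp (n * w) := by positivity
  have hgeom := geom_sum_mul pt n
  set S := ∑ i ∈ Finset.range n, pt ^ i with hS
  have hS0 : 0 ≤ S := Finset.sum_nonneg fun i _ => by positivity
  rw [mul_div_assoc', div_nonpos_iff]
  refine Or.inr ⟨?_, hden.le⟩
  have e : (p - 1) * (κ * ((n : ℝ) - 1) * (1 - pt ^ n) -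
      h'' (p * exp (n * w)) * (p * (exp (n * w) * (n * (pt - 1))))) =
      -(((p - 1) * (pt - 1)) * (κ * ((n : ℝ) - 1) * S +
        h'' (p * exp (n * w)) * (p * (exp (n * w) * n)))) := by
    linear_combination (-(p - 1) * κ * ((n : ℝ) - 1)) * (-hgeom)
  rw [e, neg_nonpos]
  have : 0 ≤ (n : ℝ) - 1 := by linarith
  positivity

lemma exists_polarSol (hn : 2 ≤ n) (hκ : 0 < κ) (hh : GoodH h h' h'') {L : ℝ} (hL : 0 ≤ L)
    (q₀ w₀ : ℝ) :
    ∃ w p, PolarSol n κ h' L w p ∧ w 0 = w₀ ∧ stressC n κ h' (p 0) (w 0) = q₀ := by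
  choose P hP0 hP using fun z : ℝ × ℝ => exists_stressC_eq (n := n) hκ hh z.1 z.2
  set p₀ := P (q₀, w₀) with hp₀
  have hp₀0 : 0 < p₀ := hP0 _
  set a := min 1 p₀ with ha
  set b := max 1 p₀ with hb
  have ha0 : 0 < a := lt_min one_pos hp₀0
  have ha1 : a ≤ 1 := min_le_left _ _
  have hb1 : 1 ≤ b := le_max_left _ _
  set W := |w₀| + (b + 1) * L with hW
  have hW0 : 0 ≤ W := by positivity
  set cl : ℝ → ℝ := fun x => max (-W) (min W x) with hcl
  have hclW : ∀ x, |cl x| ≤ W := fun x =>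
    abs_le.2 ⟨le_max_left _ _, max_le (by linarith) (min_le_left _ _)⟩
  have hclL : ∀ x y, |cl x - cl y| ≤ |x - y| := fun x y => by
    simp only [hcl]
    refine (abs_max_sub_max_le_max _ _ _ _).trans ?_
    simp only [sub_self, abs_zero]
    refine max_le (abs_nonneg _) ((abs_min_sub_min_le_max _ _ _ _).trans ?_)
    simp
  set Q : ℝ × ℝ → ℝ := fun z => P (z.1, cl z.2) with hQ
  set Pt : ℝ × ℝ → ℝ := fun z => max a (min b (Q z)) with hPt
  have hPta : ∀ z, a ≤ Pt z := fun z => le_max_left _ _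
  have hPtb : ∀ z, Pt z ≤ b := fun z => max_le (ha1.trans hb1) (min_le_left _ _)
  have hPt0 : ∀ z, 0 < Pt z := fun z => ha0.trans_le (hPta z)
  obtain ⟨m, M, hm, hM, hbd⟩ := exists_stressC_bound (n := n) (b := b) (W := W) hκ hh ha0
  have hLip1 : ∀ y z, Pt y < Pt z → m * (Pt z - Pt y) ≤ (1 + M) * ‖z - y‖ := by
    intro y z hlt
    have h1 : Q y ≤ Pt y := by
      have : min b (Q y) < b := (le_max_right _ _).trans_lt (hlt.trans_le (hPtb z))
      have : Q y ≤ b := by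
        by_contra! hc
        rw [min_eq_left hc.le] at this
        exact lt_irrefl _ this
      simp [hPt, min_eq_right this]
    have h2 : Pt z ≤ Q z := by
      have h3 : a < Pt z := (hPta y).trans_lt hlt
      simp only [hPt] at h3 ⊢
      have h4 : a < min b (Q z) := by simpa using h3
      rw [max_eq_right h4.le]
      exact min_le_right _ _
    have h3 := hbd (Pt y) (Pt z) (cl y.2) (cl z.2) (hPta y) hlt.le (hPtb z) (hclW _) (hclW _)
    have h4 := stressC_mono (n := n) hκ hh (hP0 _) h1 (le_refl (cl y.2))
    have h5 := stressC_mono (n := n) hκ hh (hPt0 z) h2 (le_refl (cl z.2))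
    simp only [hQ, hP] at h4 h5
    have h6 : |z.1 - y.1| ≤ ‖z - y‖ := norm_fst_le (z - y)
    have h7 : |z.2 - y.2| ≤ ‖z - y‖ := norm_snd_le (z - y)
    have h8 := (hclL z.2 y.2).trans h7
    have h9 := le_abs_self (z.1 - y.1)
    nlinarith
  have hLip : ∀ y z, |Pt y - Pt z| ≤ (1 + M) / m * ‖y - z‖ := by
    intro y z
    rw [div_mul_eq_mul_div, le_div_iff₀ hm]
    rcases lt_trichotomy (Pt y) (Pt z) with h1 | h1 | h1
    · rw [abs_sub_comm, abs_of_pos (sub_pos.2 h1), norm_sub_rev, mul_comm]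
      exact hLip1 y z h1
    · rw [h1]; simp; positivity
    · rw [abs_of_pos (sub_pos.2 h1), mul_comm]
      exact hLip1 z y h1
  set C := κ * ((n : ℝ) - 1) * (n * b ^ (n - 1)) + 1 with hC
  have hC0 : 0 ≤ C := by
    have : (0 : ℝ) ≤ (n : ℝ) - 1 := by
      have : (2 : ℝ) ≤ n := by exact_mod_cast hn
      linarith
    positivity
  have hfl : ∀ y z, ‖polarField n κ (Pt y) - polarField n κ (Pt z)‖ ≤
      C * ((1 + M) / m) * ‖y - z‖ := by
    intro y z
    refine (norm_polarField_sub_le hn hκ (hPt0 y).le (hPt0 z).le (hPtb y) (hPtb z)).trans ?_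
    refine (mul_le_mul_of_nonneg_left (hLip y z) hC0).trans_eq (mul_assoc _ _ _).symm
  have hfb : ∀ z, ‖polarField n κ (Pt z)‖ ≤ C * (b + 1) := by
    intro z
    have h1 := norm_polarField_sub_le hn hκ (hPt0 z).le zero_le_one (hPtb z) hb1
    have h2 : polarField n κ 1 = 0 := by simp [polarField]
    rw [h2, sub_zero] at h1
    refine h1.trans (mul_le_mul_of_nonneg_left ?_ hC0)
    rw [abs_le]; constructor <;> linarith [hPtb z, hPt0 z]
  have hPL : IsPicardLindelof (fun _ : ℝ => fun z => polarField n κ (Pt z))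
      (⟨0, le_rfl, hL⟩ : Icc (0 : ℝ) L) ((q₀, w₀) : ℝ × ℝ)
      ⟨C * (b + 1) * L, by positivity⟩ 0 ⟨C * (b + 1), by positivity⟩
      ⟨C * ((1 + M) / m), by positivity⟩ := by
    refine IsPicardLindelof.of_time_independent (fun z _ => hfb z) ?_ ?_
    · refine LipschitzWith.lipschitzOnWith (LipschitzWith.of_dist_le_mul fun y z => ?_)
      rw [dist_eq_norm, dist_eq_norm]
      exact hfl y z
    · change C * (b + 1) * max (L - 0) (0 - 0) ≤ C * (b + 1) * L - 0
      simp [hL]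
  obtain ⟨α, hα0, hα⟩ := hPL.exists_eq_forall_mem_Icc_hasDerivWithinAt₀
  have h0L : (0 : ℝ) ∈ Icc 0 L := ⟨le_rfl, hL⟩
  simp only at hα0
  have hα1 : ∀ t ∈ Icc 0 L, HasDerivWithinAt (fun s => (α s).1)
      (κ * ((n : ℝ) - 1) * (1 - Pt (α t) ^ n)) (Icc 0 L) t := fun t ht => (hα t ht).fst
  have hα2 : ∀ t ∈ Icc 0 L, HasDerivWithinAt (fun s => (α s).2)
      (Pt (α t) - 1) (Icc 0 L) t := fun t ht => (hα t ht).snd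
  have hwb : ∀ t ∈ Icc 0 L, cl (α t).2 = (α t).2 := by
    intro t ht
    have h1 := (convex_Icc 0 L).norm_image_sub_le_of_norm_hasDerivWithin_le (C := b + 1) hα2
      (fun s hs => by
        rw [Real.norm_eq_abs, abs_le]; constructor <;> linarith [hPtb (α s), hPt0 (α s)]) h0L ht
    rw [hα0, Real.norm_eq_abs, Real.norm_eq_abs, sub_zero, abs_of_nonneg ht.1] at h1
    have h2 : |(α t).2| ≤ W := by
      have h3 := abs_sub_abs_le_abs_sub (α t).2 w₀
      have h4 : (b + 1) * t ≤ (b + 1) * L := by gcongr; exact ht.2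
      linarith
    rw [abs_le] at h2
    simp [hcl, h2.1, h2.2]
  set p : ℝ → ℝ := fun s => Q (α s) with hp
  have hpos : ∀ s ∈ Icc 0 L, 0 < p s := fun s _ => hP0 _
  have heq : ∀ s ∈ Icc 0 L, stressC n κ h' (p s) (α s).2 = (α s).1 := by
    intro s hs
    have := hP ((α s).1, cl (α s).2)
    simp only [hwb s hs] at this
    simp only [hp, hQ, hwb s hs]
    exact this
  have hpc : ContinuousOn p (Icc 0 L) := continuousOn_of_stressC_eq (q := fun s => (α s).1)
    (w := fun s => (α s).2) hκ hh (fun s hs => (hα2 s hs).continuousWithinAt)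
    (fun s hs => (hα1 s hs).continuousWithinAt) hpos heq
  have hpd := fun s (hs : s ∈ Icc 0 L) => hasDerivWithinAt_of_stressC_eq (q := fun s => (α s).1)
    (w := fun s => (α s).2) hκ hh hs (hpc s hs) (hα2 s hs) (hα1 s hs) hpos heq
  have hsgn : ∀ s, 0 ≤ (p s - 1) * (Pt (α s) - 1) := by
    intro s
    rcases le_total 1 (p s) with h1 | h1
    · refine mul_nonneg (by linarith) (sub_nonneg.2 ?_)
      exact le_max_of_le_right (le_min hb1 h1)
    · refine mul_nonneg_of_nonpos_of_nonpos (by linarith) (sub_nonpos.2 ?_)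
      exact max_le ha1 ((min_le_right _ _).trans h1)
  have hle := fun s (hs : s ∈ Icc 0 L) =>
    sub_one_mul_deriv_nonpos (w := (α s).2) hn hκ hh (hpos s hs) (hPt0 (α s)) (hsgn s)
  have hp00 : p 0 = p₀ := by
    have := hwb 0 h0L
    rw [hα0] at this
    simp only [hp, hQ, hα0, this, hp₀]
  have hab : ∀ s ∈ Icc 0 L, p s ∈ Icc a b := by
    intro s hs
    rcases le_total 1 p₀ with h1 | h1
    · have := mem_Icc_of_mul_deriv_nonpos (f := fun s => p s - 1)
        (fun s hs => (hpd s hs).sub_const 1) hle (by rw [hp00]; linarith) s hs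
      simp only [hp00] at this
      exact ⟨by linarith [this.1], by linarith [this.2, le_max_right 1 p₀]⟩
    · have := mem_Icc_of_mul_deriv_nonpos (f := fun s => -(p s - 1))
        (fun s hs => ((hpd s hs).sub_const 1).neg)
        (fun s hs => by rw [neg_mul_neg]; exact hle s hs) (by rw [hp00]; linarith) s hs
      simp only [hp00] at this
      exact ⟨by linarith [this.2, min_le_right 1 p₀], by linarith [this.1]⟩
  have hPtp : ∀ s ∈ Icc 0 L, Pt (α s) = p s := by
    intro s hs
    have := hab s hs
    simp only [hPt]
    rw [min_eq_right this.2, max_eq_right this.1]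
  refine ⟨fun s => (α s).2, p, ⟨hpos, fun s hs => ?_, fun s hs => ?_⟩, by simp [hα0], ?_⟩
  · rw [← hPtp s hs]; exact hα2 s hs
  · rw [← hPtp s hs]
    exact (hα1 s hs).congr (fun t ht => heq t ht) (heq s hs)
  · exact (heq 0 h0L).trans (by rw [hα0])

end Polar

section Polar

variable {n : ℕ} {κ L : ℝ} {h h' h'' w p w₁ p₁ w₂ p₂ : ℝ → ℝ}

/-- The rate `g` in the decay law `p' = -g (p - 1)`. -/
def decayRate (n : ℕ) (κ : ℝ) (h'' : ℝ → ℝ) (p w : ℝ) : ℝ :=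
  (κ * ((n : ℝ) - 1) * (∑ i ∈ Finset.range n, p ^ i) +
    h'' (p * exp (n * w)) * (p * (exp (n * w) * n))) /
  (κ * (((n - 1 : ℕ) : ℝ) * p ^ (n - 1 - 1)) + h'' (p * exp (n * w)) * exp (n * w))

lemma pos_of_deriv_eq_neg_mul {f g : ℝ → ℝ}
    (hf : ∀ s ∈ Icc 0 L, HasDerivWithinAt f (-(g s * f s)) (Icc 0 L) s)
    (hg : ContinuousOn g (Icc 0 L)) (hg0 : ∀ s ∈ Icc 0 L, 0 ≤ g s) (h0 : 0 < f 0) :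
    ∀ s ∈ Icc 0 L, 0 < f s ∧ f s ≤ f 0 := by
  intro s hs
  have hnn := mem_Icc_of_mul_deriv_nonpos hf
    (fun s hs => by nlinarith [hg0 s hs, mul_nonneg (hg0 s hs) (sq_nonneg (f s))]) h0.le
  obtain ⟨x, hx, hmax⟩ := isCompact_Icc.exists_isMaxOn ⟨s, hs⟩ hg
  have hmono : MonotoneOn (fun s => exp (g x * s) * f s) (Icc 0 L) :=
    monotoneOn_Icc_of_hasDerivWithinAt
      (f' := fun s => exp (g x * s) * (g x * 1) * f s + exp (g x * s) * (-(g s * f s)))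
      (fun s hs => (((hasDerivWithinAt_id s (Icc 0 L)).const_mul (g x)).exp).mul (hf s hs))
      (fun s hs => by
        have h1 : g s ≤ g x := hmax hs
        have h2 := (hnn s hs).1
        have : exp (g x * s) * (g x * 1) * f s + exp (g x * s) * (-(g s * f s)) =
          exp (g x * s) * ((g x - g s) * f s) := by ring
        rw [this]
        have : 0 ≤ g x - g s := sub_nonneg.2 h1
        positivity)
  have h1 := hmono ⟨le_rfl, hs.1.trans hs.2⟩ hs hs.1
  simp only [mul_zero, exp_zero, one_mul] at h1
  exact ⟨pos_of_mul_pos_right (h0.trans_le h1) (exp_pos _).le, (hnn s hs).2⟩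

namespace PolarSol

lemma continuousOn_w (S : PolarSol n κ h' L w p) : ContinuousOn w (Icc 0 L) :=
  fun s hs => (S.hasDeriv_w s hs).continuousWithinAt

lemma continuousOn_p (hκ : 0 < κ) (hh : GoodH h h' h'') (S : PolarSol n κ h' L w p) :
    ContinuousOn p (Icc 0 L) :=
  continuousOn_of_stressC_eq hκ hh S.continuousOn_w
    (fun s hs => (S.hasDeriv_q s hs).continuousWithinAt) S.pos fun _ _ => rfl

lemma decayRate_den_pos (hκ : 0 < κ) (hh : GoodH h h' h'') {p w : ℝ} (hp : 0 < p) :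
    0 < κ * (((n - 1 : ℕ) : ℝ) * p ^ (n - 1 - 1)) + h'' (p * exp (n * w)) * exp (n * w) := by
  have := hh.hpp_pos (p * exp (n * w)) (by positivity)
  positivity

lemma decayRate_nonneg (hn : 2 ≤ n) (hκ : 0 < κ) (hh : GoodH h h' h'') {p w : ℝ} (hp : 0 < p) :
    0 ≤ decayRate n κ h'' p w := by
  have hn' : (2 : ℝ) ≤ n := by exact_mod_cast hn
  have h1 : (0 : ℝ) ≤ (n : ℝ) - 1 := by linarith
  have := hh.hpp_pos (p * exp (n * w)) (by positivity)
  have hS0 : 0 ≤ ∑ i ∈ Finset.range n, p ^ i := Finset.sum_nonneg fun i _ => by positivity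
  exact div_nonneg (by positivity) (decayRate_den_pos hκ hh hp).le

lemma continuousOn_decayRate (hκ : 0 < κ) (hh : GoodH h h' h'') (S : PolarSol n κ h' L w p) :
    ContinuousOn (fun s => decayRate n κ h'' (p s) (w s)) (Icc 0 L) := by
  have hp := S.continuousOn_p hκ hh
  have hw := S.continuousOn_w
  have he : ContinuousOn (fun s => exp (n * w s)) (Icc 0 L) := by fun_prop
  have hd : ContinuousOn (fun s => h'' (p s * exp (n * w s))) (Icc 0 L) :=
    hh.cont2.comp (hp.mul he) fun s hs => mul_pos (S.pos s hs) (exp_pos _)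
  unfold decayRate
  have hsum : ContinuousOn (fun s => ∑ i ∈ Finset.range n, p s ^ i) (Icc 0 L) :=
    continuousOn_finsetSum _ fun i _ => hp.pow i
  refine ContinuousOn.div
    ((continuousOn_const.mul hsum).add (hd.mul (hp.mul (he.mul continuousOn_const))))
    ((continuousOn_const.mul (continuousOn_const.mul (hp.pow _))).add (hd.mul he)) fun s hs => ?_
  exact (decayRate_den_pos hκ hh (S.pos s hs)).ne'

lemma hasDeriv_p (hκ : 0 < κ) (hh : GoodH h h' h'') (S : PolarSol n κ h' L w p) {s : ℝ}
    (hs : s ∈ Icc 0 L) :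
    HasDerivWithinAt p (-(decayRate n κ h'' (p s) (w s) * (p s - 1))) (Icc 0 L) s := by
  have := hasDerivWithinAt_of_stressC_eq hκ hh hs (S.continuousOn_p hκ hh s hs)
    (S.hasDeriv_w s hs) (S.hasDeriv_q s hs) S.pos fun _ _ => rfl
  refine this.congr_deriv ?_
  rw [decayRate, div_mul_eq_mul_div, ← neg_div]
  congr 1
  linear_combination (κ * ((n : ℝ) - 1)) * geom_sum_mul (p s) n

lemma one_lt (hn : 2 ≤ n) (hκ : 0 < κ) (hh : GoodH h h' h'') (S : PolarSol n κ h' L w p)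
    (h0 : 1 < p 0) : ∀ s ∈ Icc 0 L, 1 < p s ∧ p s ≤ p 0 := by
  intro s hs
  have := pos_of_deriv_eq_neg_mul (f := fun s => p s - 1)
    (fun s hs => (S.hasDeriv_p hκ hh hs).sub_const 1) (S.continuousOn_decayRate hκ hh)
    (fun s hs => decayRate_nonneg hn hκ hh (S.pos s hs)) (sub_pos.2 h0) s hs
  exact ⟨by linarith [this.1], by linarith [this.2]⟩

lemma lt_one (hn : 2 ≤ n) (hκ : 0 < κ) (hh : GoodH h h' h'') (S : PolarSol n κ h' L w p)
    (h0 : p 0 < 1) : ∀ s ∈ Icc 0 L, p s < 1 ∧ p 0 ≤ p s := by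
  intro s hs
  have := pos_of_deriv_eq_neg_mul (f := fun s => 1 - p s)
    (fun s hs => ((S.hasDeriv_p hκ hh hs).const_sub 1).congr_deriv (by ring))
    (S.continuousOn_decayRate hκ hh)
    (fun s hs => decayRate_nonneg hn hκ hh (S.pos s hs)) (sub_pos.2 h0) s hs
  exact ⟨by linarith [this.1], by linarith [this.2]⟩

lemma eq_one (hn : 2 ≤ n) (hκ : 0 < κ) (hh : GoodH h h' h'') (S : PolarSol n κ h' L w p)
    (h0 : p 0 = 1) : ∀ s ∈ Icc 0 L, p s = 1 := by
  intro s hs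
  have := mem_Icc_of_mul_deriv_nonpos (f := fun s => p s - 1)
    (fun s hs => (S.hasDeriv_p hκ hh hs).sub_const 1)
    (fun s hs => by
      nlinarith [mul_nonneg (decayRate_nonneg (w := w s) hn hκ hh (S.pos s hs))
        (sq_nonneg (p s - 1))]) (by simp [h0]) s hs
  simp only [h0, sub_self, Icc_self, mem_singleton_iff] at this
  linarith

lemma mem_Icc (hn : 2 ≤ n) (hκ : 0 < κ) (hh : GoodH h h' h'') (S : PolarSol n κ h' L w p) :
    ∀ s ∈ Icc 0 L, p s ∈ Icc (min 1 (p 0)) (max 1 (p 0)) := by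
  intro s hs
  rcases lt_trichotomy (p 0) 1 with h0 | h0 | h0
  · have := S.lt_one hn hκ hh h0 s hs
    exact ⟨min_le_of_right_le this.2, le_max_of_le_left this.1.le⟩
  · simp [S.eq_one hn hκ hh h0 s hs, h0]
  · have := S.one_lt hn hκ hh h0 s hs
    exact ⟨min_le_of_left_le this.1.le, le_max_of_le_right this.2⟩

/-- The modified Cauchy stress along a solution. -/
def stress (n : ℕ) (κ : ℝ) (h' w p : ℝ → ℝ) (s : ℝ) : ℝ :=
  stressC n κ h' (p s) (w s) + κ * ((n : ℝ) - 1) * (1 / n + w s)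

lemma hasDeriv_stress (S : PolarSol n κ h' L w p) {s : ℝ} (hs : s ∈ Icc 0 L) :
    HasDerivWithinAt (stress n κ h' w p) (κ * ((n : ℝ) - 1) * (p s - p s ^ n)) (Icc 0 L) s := by
  refine ((S.hasDeriv_q s hs).add
    (((S.hasDeriv_w s hs).const_add (1 / (n : ℝ))).const_mul (κ * ((n : ℝ) - 1)))).congr_deriv ?_
  ring

lemma shift (S : PolarSol n κ h' L w p) {τ : ℝ} (hτ : 0 ≤ τ) :
    PolarSol n κ h' (L - τ) (fun s => w (s + τ)) (fun s => p (s + τ)) := by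
  have hm : MapsTo (fun s => s + τ) (Icc 0 (L - τ)) (Icc 0 L) := fun s hs =>
    ⟨add_nonneg hs.1 hτ, by linarith [hs.2]⟩
  have hd : ∀ s, HasDerivWithinAt (fun s => s + τ) 1 (Icc 0 (L - τ)) s := fun s =>
    (hasDerivWithinAt_id s _).add_const τ
  refine ⟨fun s hs => S.pos _ (hm hs), fun s hs => ?_, fun s hs => ?_⟩
  · exact ((S.hasDeriv_w _ (hm hs)).comp s (hd s) hm).congr_deriv (mul_one _)
  · exact ((S.hasDeriv_q _ (hm hs)).comp s (hd s) hm).congr_deriv (mul_one _)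

lemma restrict (S : PolarSol n κ h' L w p) {L' : ℝ} (hL' : L' ≤ L) : PolarSol n κ h' L' w p := by
  have hm : Icc 0 L' ⊆ Icc 0 L := Icc_subset_Icc_right hL'
  exact ⟨fun s hs => S.pos _ (hm hs), fun s hs => (S.hasDeriv_w _ (hm hs)).mono hm,
    fun s hs => (S.hasDeriv_q _ (hm hs)).mono hm⟩

/-- Two-sided weighted arithmetic-geometric mean inequality. -/
lemma mul_pow_pred_le (hn : 2 ≤ n) {x y : ℝ} (hx : 0 ≤ x) (hy : 0 ≤ y) :
    (n : ℝ) * x * y ^ (n - 1) ≤ x ^ n + ((n : ℝ) - 1) * y ^ n := by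
  rcases hy.eq_or_lt with rfl | hy
  · rw [zero_pow (by omega), zero_pow (by omega)]
    simp; positivity
  have h1 := one_add_mul_sub_le_pow (a := x / y) (by linarith [div_nonneg hx hy.le]) n
  have h2 : y ^ n = y * y ^ (n - 1) := by rw [← pow_succ']; congr 1; omega
  rw [div_pow, le_div_iff₀ (by positivity), h2] at h1
  have h3 : (1 + (n : ℝ) * (x / y - 1)) * (y * y ^ (n - 1)) =
      y * y ^ (n - 1) + n * (x - y) * y ^ (n - 1) := by
    field_simp
  rw [h3] at h1
  rw [h2]
  linarith

lemma monotoneOn_pairing (hn : 2 ≤ n) (hκ : 0 < κ) (hh : GoodH h h' h'')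
    (S₁ : PolarSol n κ h' L w₁ p₁) (S₂ : PolarSol n κ h' L w₂ p₂) :
    MonotoneOn (fun s => (stressC n κ h' (p₁ s) (w₁ s) - stressC n κ h' (p₂ s) (w₂ s)) *
      (exp (n * (w₁ s + s)) - exp (n * (w₂ s + s)))) (Icc 0 L) := by
  have he : ∀ {w p : ℝ → ℝ} (_ : PolarSol n κ h' L w p), ∀ s ∈ Icc 0 L,
      HasDerivWithinAt (fun s => exp (n * (w s + s))) (exp (n * (w s + s)) * (n * p s))
        (Icc 0 L) s := fun S s hs =>
    ((((S.hasDeriv_w s hs).add (hasDerivWithinAt_id s _)).const_mul (n : ℝ)).exp).congr_deriv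
      (by simp)
  refine monotoneOn_Icc_of_hasDerivWithinAt (fun s hs =>
    ((S₁.hasDeriv_q s hs).sub (S₂.hasDeriv_q s hs)).mul ((he S₁ s hs).sub (he S₂ s hs)))
    fun s hs => ?_
  have hp1 := S₁.pos s hs
  have hp2 := S₂.pos s hs
  have a1 := mul_pow_pred_le hn hp1.le hp2.le
  have a2 := mul_pow_pred_le hn hp2.le hp1.le
  have b1 : p₁ s ^ n = p₁ s * p₁ s ^ (n - 1) := by rw [← pow_succ']; congr 1; omega
  have b2 : p₂ s ^ n = p₂ s * p₂ s ^ (n - 1) := by rw [← pow_succ']; congr 1; omega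
  have c : ∀ x : ℝ, exp (n * (x + s)) = exp (n * x) * exp (n * s) := fun x => by
    rw [← exp_add]; congr 1; ring
  have hmon : 0 ≤ (h' (p₁ s * exp (n * w₁ s)) - h' (p₂ s * exp (n * w₂ s))) *
      (p₁ s * exp (n * w₁ s) - p₂ s * exp (n * w₂ s)) := by
    have d1 : p₁ s * exp (n * w₁ s) ∈ Ioi (0 : ℝ) := mem_Ioi.2 (by positivity)
    have d2 : p₂ s * exp (n * w₂ s) ∈ Ioi (0 : ℝ) := mem_Ioi.2 (by positivity)
    rcases le_total (p₁ s * exp (n * w₁ s)) (p₂ s * exp (n * w₂ s)) with h1 | h1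
    · have := hh.deriv_strictMonoOn.monotoneOn d1 d2 h1
      nlinarith
    · have := hh.deriv_strictMonoOn.monotoneOn d2 d1 h1
      nlinarith
  simp only [c, stressC, b1, b2] at a1 a2 ⊢
  set E := exp (n * s)
  set x := exp (n * w₁ s)
  set y := exp (n * w₂ s)
  set P := p₁ s ^ (n - 1)
  set Q := p₂ s ^ (n - 1)
  set A := h' (p₁ s * x)
  set B := h' (p₂ s * y)
  have hE : 0 < E := exp_pos _
  have hx : 0 < x := exp_pos _
  have hy : 0 < y := exp_pos _
  have e : ((κ * ((n : ℝ) - 1) * (1 - p₁ s * P) - κ * ((n : ℝ) - 1) * (1 - p₂ s * Q)) *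
        (x * E - y * E) + (κ * P + A - (κ * Q + B)) *
        (x * E * (n * p₁ s) - y * E * (n * p₂ s))) =
      E * (κ * (x * (p₁ s * P + ((n : ℝ) - 1) * (p₂ s * Q) - n * p₁ s * Q) +
        y * (p₂ s * Q + ((n : ℝ) - 1) * (p₁ s * P) - n * p₂ s * P)) +
        n * ((A - B) * (p₁ s * x - p₂ s * y))) := by ring
  have f1 := sub_nonneg.2 a1
  have f2 := sub_nonneg.2 a2
  have : 0 ≤ E * (κ * (x * (p₁ s * P + ((n : ℝ) - 1) * (p₂ s * Q) - n * p₁ s * Q) +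
        y * (p₂ s * Q + ((n : ℝ) - 1) * (p₁ s * P) - n * p₂ s * P)) +
        n * ((A - B) * (p₁ s * x - p₂ s * y))) := by positivity
  rw [← e] at this
  simpa using this

/-- Solutions with the same initial position and ordered initial stresses do not meet again. -/
lemma lt_of_stress_lt (hn : 2 ≤ n) (hκ : 0 < κ) (hh : GoodH h h' h'')
    (S₁ : PolarSol n κ h' L w₁ p₁) (S₂ : PolarSol n κ h' L w₂ p₂) (hw : w₁ 0 = w₂ 0)
    (hq : stressC n κ h' (p₁ 0) (w₁ 0) < stressC n κ h' (p₂ 0) (w₂ 0)) :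
    ∀ s ∈ Ioc 0 L, w₁ s < w₂ s := by
  intro s hs
  have hsL : s ∈ Icc 0 L := ⟨hs.1.le, hs.2⟩
  have h0 : (0 : ℝ) ∈ Icc 0 L := ⟨le_rfl, hs.1.le.trans hs.2⟩
  have hp : p₁ 0 < p₂ 0 := by
    rw [hw] at hq
    exact lt_of_stressC_lt hκ hh (S₂.pos 0 h0) hq
  have c1 := (S₁.continuousOn_p hκ hh 0 h0).eventually_lt (S₂.continuousOn_p hκ hh 0 h0) hp
  have c2 := ((S₁.hasDeriv_q 0 h0).continuousWithinAt).eventually_lt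
    (S₂.hasDeriv_q 0 h0).continuousWithinAt hq
  obtain ⟨η, hη, hsub⟩ := Metric.mem_nhdsWithin_iff.1 (c1.and c2)
  set η' := min (η / 2) s with hη'
  have hη'0 : 0 < η' := lt_min (by linarith) hs.1
  have hη's : η' ≤ s := min_le_right _ _
  have hev : ∀ t ∈ Icc 0 η', p₁ t < p₂ t ∧
      stressC n κ h' (p₁ t) (w₁ t) < stressC n κ h' (p₂ t) (w₂ t) := by
    intro t ht
    refine hsub ⟨?_, ht.1, ht.2.trans (hη's.trans hs.2)⟩
    rw [Metric.mem_ball, Real.dist_eq, sub_zero, abs_of_nonneg ht.1]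
    linarith [ht.2, min_le_left (η / 2) s]
  have hsub' : Icc 0 η' ⊆ Icc 0 L := Icc_subset_Icc_right (hη's.trans hs.2)
  have hmono : StrictMonoOn (fun t => w₂ t - w₁ t) (Icc 0 η') :=
    strictMonoOn_Icc_of_hasDerivWithinAt
      (fun t ht => ((S₂.hasDeriv_w t (hsub' ht)).sub (S₁.hasDeriv_w t (hsub' ht))).mono hsub')
      (fun t ht => by linarith [(hev t ht).1])
  have hη'm : η' ∈ Icc 0 η' := ⟨hη'0.le, le_rfl⟩
  have hd : 0 < w₂ η' - w₁ η' := by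
    have := hmono ⟨le_rfl, hη'0.le⟩ hη'm hη'0
    simpa [hw] using this
  have hn0 : (0 : ℝ) < n := by positivity
  by_contra! hc
  obtain ⟨t, ht, hwt⟩ := intermediate_value_Icc' (f := fun t => w₂ t - w₁ t) hη's
    ((S₂.continuousOn_w.sub S₁.continuousOn_w).mono
      (Icc_subset_Icc hη'0.le hs.2))
    (show (0 : ℝ) ∈ Icc (w₂ s - w₁ s) (w₂ η' - w₁ η') from ⟨by linarith, hd.le⟩)
  have hD := monotoneOn_pairing hn hκ hh S₁ S₂ (hsub' hη'm)
    ⟨hη'0.le.trans ht.1, ht.2.trans hs.2⟩ ht.1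
  have hwt' : w₁ t = w₂ t := by simp only at hwt; linarith
  simp only [hwt', sub_self, mul_zero] at hD
  have h1 : exp (n * (w₁ η' + η')) < exp (n * (w₂ η' + η')) := by
    apply exp_lt_exp.2
    have : w₁ η' < w₂ η' := by linarith
    gcongr
  nlinarith [(hev η' hη'm).2]

end PolarSol

end Polar

section Shooting

variable {n : ℕ} {κ L : ℝ} {h h' h'' w p w₁ p₁ w₂ p₂ : ℝ → ℝ}

namespace PolarSol

lemma strictMonoOn_w (hn : 2 ≤ n) (hκ : 0 < κ) (hh : GoodH h h' h'') (S : PolarSol n κ h' L w p)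
    (h0 : 1 < p 0) : StrictMonoOn w (Icc 0 L) :=
  strictMonoOn_Icc_of_hasDerivWithinAt S.hasDeriv_w
    fun s hs => sub_pos.2 (S.one_lt hn hκ hh h0 s hs).1

lemma strictAntiOn_w (hn : 2 ≤ n) (hκ : 0 < κ) (hh : GoodH h h' h'') (S : PolarSol n κ h' L w p)
    (h0 : p 0 < 1) : StrictAntiOn w (Icc 0 L) := fun x hx y hy hxy => by
  have := strictMonoOn_Icc_of_hasDerivWithinAt (fun s hs => (S.hasDeriv_w s hs).neg)
    (fun s hs => by linarith [(S.lt_one hn hκ hh h0 s hs).1]) hx hy hxy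
  simpa using this

lemma strictAntiOn_stress (hn : 2 ≤ n) (hκ : 0 < κ) (hh : GoodH h h' h'')
    (S : PolarSol n κ h' L w p) (h0 : 1 < p 0) : StrictAntiOn (stress n κ h' w p) (Icc 0 L) :=
  fun x hx y hy hxy => by
  have hn' : (2 : ℝ) ≤ n := by exact_mod_cast hn
  have := strictMonoOn_Icc_of_hasDerivWithinAt (fun s hs => (S.hasDeriv_stress hs).neg)
    (fun s hs => by
      have h1 : p s < p s ^ n := lt_self_pow₀ (S.one_lt hn hκ hh h0 s hs).1 (by omega)
      have h2 : 0 < κ * ((n : ℝ) - 1) := mul_pos hκ (by linarith)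
      nlinarith) hx hy hxy
  simpa using this

lemma strictMonoOn_stress (hn : 2 ≤ n) (hκ : 0 < κ) (hh : GoodH h h' h'')
    (S : PolarSol n κ h' L w p) (h0 : p 0 < 1) : StrictMonoOn (stress n κ h' w p) (Icc 0 L) := by
  have hn' : (2 : ℝ) ≤ n := by exact_mod_cast hn
  refine strictMonoOn_Icc_of_hasDerivWithinAt (fun s hs => S.hasDeriv_stress hs) fun s hs => ?_
  have h1 : p s ^ n < p s :=
    pow_lt_self_of_lt_one₀ (S.pos s hs) (S.lt_one hn hκ hh h0 s hs).1 (by omega)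
  have h2 : 0 < κ * ((n : ℝ) - 1) := mul_pos hκ (by linarith)
  nlinarith

lemma one_lt_of_neg (hn : 2 ≤ n) (hκ : 0 < κ) (hh : GoodH h h' h'')
    (hone : stressC n κ h' 1 0 + κ * ((n : ℝ) - 1) * (1 / n) = 0)
    (hp : 0 < p 0) (hT : 0 ≤ stress n κ h' w p 0) (hw : w 0 < 0) : 1 < p 0 := by
  have hn' : (2 : ℝ) ≤ n := by exact_mod_cast hn
  have h2 : 0 < κ * ((n : ℝ) - 1) := mul_pos hκ (by linarith)
  by_contra! hc
  have := stressC_mono (n := n) hκ hh hp hc hw.le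
  unfold stress at hT
  nlinarith

lemma lt_one_of_pos (hn : 2 ≤ n) (hκ : 0 < κ) (hh : GoodH h h' h'')
    (hone : stressC n κ h' 1 0 + κ * ((n : ℝ) - 1) * (1 / n) = 0)
    (hT : stress n κ h' w p 0 ≤ 0) (hw : 0 < w 0) : p 0 < 1 := by
  have hn' : (2 : ℝ) ≤ n := by exact_mod_cast hn
  have h2 : 0 < κ * ((n : ℝ) - 1) := mul_pos hκ (by linarith)
  by_contra! hc
  have := stressC_mono (n := n) hκ hh one_pos hc hw.le
  unfold stress at hT
  nlinarith

lemma neg_of_neg (hn : 2 ≤ n) (hκ : 0 < κ) (hh : GoodH h h' h'') (hL : 0 ≤ L)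
    (hone : stressC n κ h' 1 0 + κ * ((n : ℝ) - 1) * (1 / n) = 0)
    (S : PolarSol n κ h' L w p) (hT : stress n κ h' w p 0 = 0) (hw : w 0 < 0) : w L < 0 := by
  have h0 : (0 : ℝ) ∈ Icc 0 L := ⟨le_rfl, hL⟩
  have hL' : L ∈ Icc 0 L := ⟨hL, le_rfl⟩
  have hp := one_lt_of_neg hn hκ hh hone (S.pos 0 h0) hT.ge hw
  rcases hL.eq_or_lt with rfl | hL
  · exact hw
  have h1 := S.strictAntiOn_stress hn hκ hh hp h0 hL' hL
  rw [hT] at h1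
  by_contra! hc
  have h3 := stressC_mono (n := n) hκ hh one_pos (S.one_lt hn hκ hh hp L hL').1.le hc
  have hn' : (2 : ℝ) ≤ n := by exact_mod_cast hn
  have h2 : 0 < κ * ((n : ℝ) - 1) := mul_pos hκ (by linarith)
  unfold stress at h1
  nlinarith

lemma pos_of_pos (hn : 2 ≤ n) (hκ : 0 < κ) (hh : GoodH h h' h'') (hL : 0 ≤ L)
    (hone : stressC n κ h' 1 0 + κ * ((n : ℝ) - 1) * (1 / n) = 0)
    (S : PolarSol n κ h' L w p) (hT : stress n κ h' w p 0 = 0) (hw : 0 < w 0) : 0 < w L := by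
  have h0 : (0 : ℝ) ∈ Icc 0 L := ⟨le_rfl, hL⟩
  have hL' : L ∈ Icc 0 L := ⟨hL, le_rfl⟩
  have hp := lt_one_of_pos hn hκ hh hone hT.le hw
  rcases hL.eq_or_lt with rfl | hL
  · exact hw
  have h1 := S.strictMonoOn_stress hn hκ hh hp h0 hL' hL
  rw [hT] at h1
  by_contra! hc
  have h3 := stressC_mono (n := n) hκ hh (S.pos L hL') (S.lt_one hn hκ hh hp L hL').1.le hc
  have hn' : (2 : ℝ) ≤ n := by exact_mod_cast hn
  have h2 : 0 < κ * ((n : ℝ) - 1) := mul_pos hκ (by linarith)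
  unfold stress at h1
  nlinarith

lemma eq_zero_of_eq_zero (hn : 2 ≤ n) (hκ : 0 < κ) (hh : GoodH h h' h'') (hL : 0 ≤ L)
    (hone : stressC n κ h' 1 0 + κ * ((n : ℝ) - 1) * (1 / n) = 0)
    (S : PolarSol n κ h' L w p) (hT : stress n κ h' w p 0 = 0) (hw : w 0 = 0) : w L = 0 := by
  have h0 : (0 : ℝ) ∈ Icc 0 L := ⟨le_rfl, hL⟩
  have hp : p 0 = 1 := by
    unfold stress at hT
    rw [hw, add_zero] at hT
    rcases lt_trichotomy (p 0) 1 with h1 | h1 | h1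
    · have := stressC_strictMono (n := n) hκ hh (S.pos 0 h0) h1 (le_refl 0); linarith
    · exact h1
    · have := stressC_strictMono (n := n) hκ hh one_pos h1 (le_refl 0); linarith
  have := (convex_Icc 0 L).norm_image_sub_le_of_norm_hasDerivWithin_le (C := 0) S.hasDeriv_w
    (fun s hs => by rw [S.eq_one hn hκ hh hp s hs]; simp) h0 (show L ∈ Icc 0 L from ⟨hL, le_rfl⟩)
  rw [hw, zero_mul, sub_zero] at this
  exact norm_le_zero_iff.1 this

/-- Solutions leaving the inner boundary stress-free are strictly ordered by their initial value. -/
lemma endpoint_lt (hn : 2 ≤ n) (hκ : 0 < κ) (hh : GoodH h h' h'') (hL : 0 < L)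
    (hone : stressC n κ h' 1 0 + κ * ((n : ℝ) - 1) * (1 / n) = 0)
    (S₁ : PolarSol n κ h' L w₁ p₁) (S₂ : PolarSol n κ h' L w₂ p₂)
    (hT₁ : stress n κ h' w₁ p₁ 0 = 0) (hT₂ : stress n κ h' w₂ p₂ 0 = 0)
    (hw : w₁ 0 < w₂ 0) : w₁ L < w₂ L := by
  have h0 : (0 : ℝ) ∈ Icc 0 L := ⟨le_rfl, hL.le⟩
  have hL' : L ∈ Icc 0 L := ⟨hL.le, le_rfl⟩
  rcases lt_trichotomy (w₂ 0) 0 with h2 | h2 | h2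
  · have hp1 := one_lt_of_neg hn hκ hh hone (S₁.pos 0 h0) hT₁.ge (hw.trans h2)
    have hp2 := one_lt_of_neg hn hκ hh hone (S₂.pos 0 h0) hT₂.ge h2
    have hm2 := S₂.strictMonoOn_w hn hκ hh hp2
    by_contra! hc
    obtain ⟨τ, hτ, hwτ⟩ := intermediate_value_Icc hL.le S₁.continuousOn_w
      (show w₂ 0 ∈ Icc (w₁ 0) (w₁ L) from ⟨hw.le, ((hm2 h0 hL' hL).le).trans hc⟩)
    have hτ0 : 0 < τ := hτ.1.lt_of_ne (by rintro rfl; linarith)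
    rcases hτ.2.eq_or_lt with rfl | hτL
    · linarith [hm2 h0 hL' hL]
    have hT := S₁.strictAntiOn_stress hn hκ hh hp1 h0 hτ hτ0
    have hlt := lt_of_stress_lt hn hκ hh (S₁.shift hτ.1)
      (S₂.restrict (show L - τ ≤ L by linarith)) (by simpa using hwτ)
      (by
        simp only [zero_add]
        unfold stress at hT hT₁ hT₂
        rw [hwτ] at hT ⊢
        linarith) (L - τ) ⟨by linarith, le_rfl⟩
    have := hm2 (show L - τ ∈ Icc 0 L from ⟨by linarith, by linarith⟩) hL' (by linarith)
    simp only [sub_add_cancel] at hlt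
    linarith
  · rw [S₂.eq_zero_of_eq_zero hn hκ hh hL.le hone hT₂ h2]
    exact S₁.neg_of_neg hn hκ hh hL.le hone hT₁ (hw.trans_eq h2)
  · have hL2 := S₂.pos_of_pos hn hκ hh hL.le hone hT₂ h2
    rcases lt_trichotomy (w₁ 0) 0 with h1 | h1 | h1
    · exact (S₁.neg_of_neg hn hκ hh hL.le hone hT₁ h1).trans hL2
    · rwa [S₁.eq_zero_of_eq_zero hn hκ hh hL.le hone hT₁ h1]
    have hp1 := lt_one_of_pos hn hκ hh hone hT₁.le h1
    have hp2 := lt_one_of_pos hn hκ hh hone hT₂.le h2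
    have hm1 := S₁.strictAntiOn_w hn hκ hh hp1
    by_contra! hc
    obtain ⟨τ, hτ, hwτ⟩ := intermediate_value_Icc' hL.le S₂.continuousOn_w
      (show w₁ 0 ∈ Icc (w₂ L) (w₂ 0) from ⟨hc.trans (hm1 h0 hL' hL).le, hw.le⟩)
    have hτ0 : 0 < τ := hτ.1.lt_of_ne (by rintro rfl; linarith)
    rcases hτ.2.eq_or_lt with rfl | hτL
    · linarith [hm1 h0 hL' hL]
    have hT := S₂.strictMonoOn_stress hn hκ hh hp2 h0 hτ hτ0
    have hlt := lt_of_stress_lt hn hκ hh (S₁.restrict (show L - τ ≤ L by linarith))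
      (S₂.shift hτ.1) (by simpa using hwτ.symm)
      (by
        simp only [zero_add]
        unfold stress at hT hT₁ hT₂
        rw [hwτ] at hT ⊢
        linarith) (L - τ) ⟨by linarith, le_rfl⟩
    have := hm1 (show L - τ ∈ Icc 0 L from ⟨by linarith, by linarith⟩) hL' (by linarith)
    simp only [sub_add_cancel] at hlt
    linarith

/-- Uniform a priori bounds for solutions with bounded data. -/
lemma exists_bounds (hn : 2 ≤ n) (hκ : 0 < κ) (hh : GoodH h h' h'') (L M Q : ℝ) :
    ∃ a b W : ℝ, 0 < a ∧ ∀ w p, PolarSol n κ h' L w p → |w 0| ≤ M →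
      |stressC n κ h' (p 0) (w 0)| ≤ Q → ∀ s ∈ Icc 0 L, a ≤ p s ∧ p s ≤ b ∧ |w s| ≤ W := by
  obtain ⟨a₀, ha₀, ha⟩ := exists_stressC_eq (n := n) hκ hh (-Q) M
  obtain ⟨b₀, hb₀, hb⟩ := exists_stressC_eq (n := n) hκ hh Q (-M)
  refine ⟨min 1 a₀, max 1 b₀, M + (max 1 b₀ + 1) * L, lt_min one_pos ha₀,
    fun w p S hM hQ s hs => ?_⟩
  have h0 : (0 : ℝ) ∈ Icc 0 L := ⟨le_rfl, hs.1.trans hs.2⟩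
  rw [abs_le] at hM hQ
  have h1 : a₀ ≤ p 0 := by
    by_contra! hc
    linarith [stressC_strictMono (n := n) hκ hh (S.pos 0 h0) hc hM.2]
  have h2 : p 0 ≤ b₀ := by
    by_contra! hc
    linarith [stressC_strictMono (n := n) hκ hh hb₀ hc hM.1]
  have h3 : ∀ s ∈ Icc 0 L, p s ≤ max 1 b₀ := fun s hs =>
    (S.mem_Icc hn hκ hh s hs).2.trans (max_le_max le_rfl h2)
  refine ⟨(min_le_min le_rfl h1).trans (S.mem_Icc hn hκ hh s hs).1, h3 s hs, ?_⟩
  have h4 := (convex_Icc 0 L).norm_image_sub_le_of_norm_hasDerivWithin_le (C := max 1 b₀ + 1)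
    S.hasDeriv_w (fun t ht => by
      rw [Real.norm_eq_abs, abs_le]; constructor <;> linarith [h3 t ht, S.pos t ht]) h0 hs
  rw [Real.norm_eq_abs, Real.norm_eq_abs, sub_zero, abs_of_nonneg hs.1] at h4
  have h5 : (max 1 b₀ + 1) * s ≤ (max 1 b₀ + 1) * L := by gcongr; exact hs.2
  have := abs_sub_abs_le_abs_sub (w s) (w 0)
  linarith [abs_le.2 hM]

/-- Lipschitz dependence of the endpoint on the initial data. -/
lemma exists_endpoint_lipschitz (hn : 2 ≤ n) (hκ : 0 < κ) (hh : GoodH h h' h'') (hL : 0 ≤ L)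
    (M Q : ℝ) :
    ∃ K : ℝ, 0 < K ∧ ∀ w₁ p₁ w₂ p₂ : ℝ → ℝ, PolarSol n κ h' L w₁ p₁ → PolarSol n κ h' L w₂ p₂ →
      |w₁ 0| ≤ M → |w₂ 0| ≤ M → |stressC n κ h' (p₁ 0) (w₁ 0)| ≤ Q →
      |stressC n κ h' (p₂ 0) (w₂ 0)| ≤ Q →
      |w₁ L - w₂ L| ≤
        max |stressC n κ h' (p₁ 0) (w₁ 0) - stressC n κ h' (p₂ 0) (w₂ 0)| |w₁ 0 - w₂ 0| * K := by
  obtain ⟨a, b, W, ha, hbox⟩ := exists_bounds hn hκ hh L M Q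
  obtain ⟨m, B, hm, hB, hbd⟩ := exists_stressC_bound (n := n) (b := b) (W := W) hκ hh ha
  set C := κ * ((n : ℝ) - 1) * (n * b ^ (n - 1)) + 1 with hC
  refine ⟨exp (C * ((1 + B) / m) * L), exp_pos _, fun w₁ p₁ w₂ p₂ S₁ S₂ hM₁ hM₂ hQ₁ hQ₂ => ?_⟩
  set f₁ : ℝ → ℝ × ℝ := fun s => (stressC n κ h' (p₁ s) (w₁ s), w₁ s) with hf₁
  set f₂ : ℝ → ℝ × ℝ := fun s => (stressC n κ h' (p₂ s) (w₂ s), w₂ s) with hf₂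
  have hd₁ : ∀ s ∈ Icc 0 L, HasDerivWithinAt f₁ (polarField n κ (p₁ s)) (Icc 0 L) s :=
    fun s hs => (S₁.hasDeriv_q s hs).prodMk (S₁.hasDeriv_w s hs)
  have hd₂ : ∀ s ∈ Icc 0 L, HasDerivWithinAt f₂ (polarField n κ (p₂ s)) (Icc 0 L) s :=
    fun s hs => (S₂.hasDeriv_q s hs).prodMk (S₂.hasDeriv_w s hs)
  have hmp : ∀ s ∈ Icc 0 L, |p₁ s - p₂ s| ≤ (1 + B) / m * ‖f₁ s - f₂ s‖ := by
    intro s hs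
    obtain ⟨a1, b1, c1⟩ := hbox _ _ S₁ hM₁ hQ₁ s hs
    obtain ⟨a2, b2, c2⟩ := hbox _ _ S₂ hM₂ hQ₂ s hs
    have h6 : |stressC n κ h' (p₁ s) (w₁ s) - stressC n κ h' (p₂ s) (w₂ s)| ≤ ‖f₁ s - f₂ s‖ :=
      norm_fst_le (f₁ s - f₂ s)
    have h7 : |w₁ s - w₂ s| ≤ ‖f₁ s - f₂ s‖ := norm_snd_le (f₁ s - f₂ s)
    rw [abs_le] at h6
    rw [div_mul_eq_mul_div, le_div_iff₀ hm]
    rcases le_total (p₁ s) (p₂ s) with h1 | h1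
    · have := hbd _ _ (w₁ s) (w₂ s) a1 h1 b2 c1 c2
      rw [abs_sub_comm (w₂ s)] at this
      rw [abs_sub_comm, abs_of_nonneg (sub_nonneg.2 h1)]
      nlinarith
    · have := hbd _ _ (w₂ s) (w₁ s) a2 h1 b1 c2 c1
      rw [abs_of_nonneg (sub_nonneg.2 h1)]
      nlinarith
  have key := norm_le_gronwallBound_of_norm_deriv_right_le (f := fun s => f₁ s - f₂ s)
    (f' := fun s => polarField n κ (p₁ s) - polarField n κ (p₂ s))
    (δ := ‖f₁ 0 - f₂ 0‖) (K := C * ((1 + B) / m)) (ε := 0) (a := 0) (b := L)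
    (fun s hs => ((hd₁ s hs).sub (hd₂ s hs)).continuousWithinAt)
    (fun s hs => ((hd₁ s (Ico_subset_Icc_self hs)).sub
      (hd₂ s (Ico_subset_Icc_self hs))).mono_of_mem_nhdsWithin
        (mem_of_superset (Icc_mem_nhdsGE hs.2) (Icc_subset_Icc_left hs.1))) le_rfl
    (fun s hs => by
      have hs' := Ico_subset_Icc_self hs
      obtain ⟨a1, b1, c1⟩ := hbox _ _ S₁ hM₁ hQ₁ s hs'
      obtain ⟨a2, b2, c2⟩ := hbox _ _ S₂ hM₂ hQ₂ s hs'
      refine (norm_polarField_sub_le hn hκ (S₁.pos s hs').le (S₂.pos s hs').le b1 b2).trans ?_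
      have hb0 : 0 ≤ b := (ha.le.trans a1).trans b1
      have : (0 : ℝ) ≤ (n : ℝ) - 1 := by
        have : (2 : ℝ) ≤ n := by exact_mod_cast hn
        linarith
      have hC0 : 0 ≤ C := by positivity
      rw [add_zero]
      exact (mul_le_mul_of_nonneg_left (hmp s hs') hC0).trans_eq (mul_assoc _ _ _).symm)
      L ⟨hL, le_rfl⟩
  rw [gronwallBound_ε0, sub_zero] at key
  exact (norm_snd_le (f₁ L - f₂ L)).trans key

/-- The boundary value problem with a stress-free inner boundary is solvable. -/
lemma exists_shooting (hn : 2 ≤ n) (hκ : 0 < κ) (hh : GoodH h h' h'') (hL : 0 < L)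
    (hone : stressC n κ h' 1 0 + κ * ((n : ℝ) - 1) * (1 / n) = 0) (W : ℝ) :
    ∃ w p, PolarSol n κ h' L w p ∧ stress n κ h' w p 0 = 0 ∧ w L = W := by
  have hn' : (2 : ℝ) ≤ n := by exact_mod_cast hn
  have hc : 0 < κ * ((n : ℝ) - 1) := mul_pos hκ (by linarith)
  have h0 : (0 : ℝ) ∈ Icc 0 L := ⟨le_rfl, hL.le⟩
  have hL' : L ∈ Icc 0 L := ⟨hL.le, le_rfl⟩
  choose w p S hw0 hq0 using fun w₀ : ℝ => exists_polarSol hn hκ hh hL.le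
    (-(κ * ((n : ℝ) - 1) * (1 / n + w₀))) w₀
  have hT : ∀ x, stress n κ h' (w x) (p x) 0 = 0 := fun x => by
    unfold stress; rw [hq0, hw0]; ring
  have hcont : Continuous fun x => w x L := by
    refine continuous_iff_continuousAt.2 fun x => ?_
    obtain ⟨K, hK, hlip⟩ := exists_endpoint_lipschitz hn hκ hh hL.le (|x| + 1)
      (κ * ((n : ℝ) - 1) * (1 + (|x| + 1)))
    have hb : ∀ y, |y - x| ≤ 1 → |w y 0| ≤ |x| + 1 ∧
        |stressC n κ h' (p y 0) (w y 0)| ≤ κ * ((n : ℝ) - 1) * (1 + (|x| + 1)) := by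
      intro y hy
      have h1 : |y| ≤ |x| + 1 := by linarith [abs_sub_abs_le_abs_sub y x]
      refine ⟨by rwa [hw0], ?_⟩
      rw [hq0, abs_neg, abs_mul, abs_of_pos hc]
      have h2 : |(1 : ℝ) / n| ≤ 1 := by
        rw [abs_of_nonneg (by positivity), div_le_one (by linarith)]; linarith
      have := abs_add_le (1 / (n : ℝ)) y
      gcongr
      linarith
    refine tendsto_iff_dist_tendsto_zero.2 (squeeze_zero'
      (Eventually.of_forall fun _ => dist_nonneg)
      (g := fun y => max (κ * ((n : ℝ) - 1) * |y - x|) |y - x| * K) ?_ ?_)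
    · filter_upwards [Metric.closedBall_mem_nhds x one_pos] with y hy
      rw [Metric.mem_closedBall, Real.dist_eq] at hy
      have h1 := hlip _ _ _ _ (S y) (S x) (hb y hy).1 (hb x (by simp)).1 (hb y hy).2
        (hb x (by simp)).2
      rw [Real.dist_eq]
      refine h1.trans (le_of_eq ?_)
      rw [hq0, hq0, hw0, hw0]
      have : -(κ * ((n : ℝ) - 1) * (1 / n + y)) - -(κ * ((n : ℝ) - 1) * (1 / n + x)) =
        -(κ * ((n : ℝ) - 1) * (y - x)) := by ring
      rw [this, abs_neg, abs_mul, abs_of_pos hc]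
    · have : Continuous fun y => max (κ * ((n : ℝ) - 1) * |y - x|) |y - x| * K := by fun_prop
      simpa using this.tendsto x
  have hhigh : W ≤ w (W + L) L := by
    have hmono := monotoneOn_Icc_of_hasDerivWithinAt
      (fun s hs => ((S (W + L)).hasDeriv_w s hs).add (hasDerivWithinAt_id s _))
      (fun s hs => by linarith [(S (W + L)).pos s hs]) h0 hL' hL.le
    simp only [Pi.add_apply, id, hw0] at hmono
    linarith
  set C := κ + h' (exp (n * W)) + κ * ((n : ℝ) - 1) * (1 / n + W) with hC
  set lo := min (-1) (W - (|C| / (κ * ((n : ℝ) - 1)) + 1)) with hlo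
  have hlow : w lo L ≤ W := by
    by_contra! hcon
    have hneg : w lo 0 < 0 := by rw [hw0]; exact (min_le_left _ _).trans_lt (by norm_num)
    have hp := one_lt_of_neg hn hκ hh hone ((S lo).pos 0 h0) (hT lo).ge hneg
    have hmono := monotoneOn_Icc_of_hasDerivWithinAt
      (fun s hs => ((((S lo).hasDeriv_w s hs).const_mul (κ * ((n : ℝ) - 1))).add
        ((S lo).hasDeriv_stress hs)).neg)
      (fun s hs => by
        have h1 := one_add_mul_sub_le_pow (a := p lo s) (by linarith [(S lo).pos s hs]) n
        have h2 := ((S lo).one_lt hn hκ hh hp s hs).1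
        have h3 : 0 ≤ ((n : ℝ) - 2) * (p lo s - 1) := mul_nonneg (by linarith) (by linarith)
        have h4 : 0 ≤ κ * ((n : ℝ) - 1) * (p lo s ^ n - 2 * p lo s + 1) :=
          mul_nonneg hc.le (by linarith)
        linarith) h0 hL' hL.le
    simp only [Pi.add_apply, Pi.neg_apply, hT, hw0] at hmono
    have h3 := stressC_mono (n := n) hκ hh one_pos ((S lo).one_lt hn hκ hh hp L hL').1.le hcon.le
    have h4 : C ≤ stress n κ h' (w lo) (p lo) L := by
      have : stressC n κ h' 1 W = κ + h' (exp (n * W)) := by simp [stressC]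
      rw [this] at h3
      unfold stress
      nlinarith
    have h5 : lo ≤ W - (|C| / (κ * ((n : ℝ) - 1)) + 1) := min_le_right _ _
    have h6 : κ * ((n : ℝ) - 1) * (|C| / (κ * ((n : ℝ) - 1)) + 1) = |C| + κ * ((n : ℝ) - 1) := by
      rw [mul_add, mul_div_cancel₀ _ hc.ne', mul_one]
    have h7 := neg_abs_le C
    nlinarith
  obtain ⟨x, -, hx⟩ := isPreconnected_univ.intermediate_value (mem_univ lo) (mem_univ (W + L))
    hcont.continuousOn ⟨hlow, hhigh⟩
  exact ⟨w x, p x, S x, hT x, hx⟩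

end PolarSol

end Shooting

section AbsolutelyContinuous

variable {a b : ℝ} {f f' φ φ' : ℝ → ℝ}

lemma AbsolutelyContinuousOnInterval.lipschitzOnWith_comp {C : ℝ≥0} {s : Set ℝ}
    (hφ : LipschitzOnWith C φ s) (hf : AbsolutelyContinuousOnInterval f a b)
    (hs : MapsTo f (uIcc a b) s) : AbsolutelyContinuousOnInterval (fun x => φ (f x)) a b := by
  rw [absolutelyContinuousOnInterval_iff] at hf ⊢
  intro η hη
  obtain ⟨δ, hδ, hd⟩ := hf (η / (C + 1)) (by positivity)
  refine ⟨δ, hδ, fun E hE hEδ => ?_⟩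
  calc _ ≤ ∑ i ∈ Finset.range E.1, C * dist (f (E.2 i).1) (f (E.2 i).2) :=
        Finset.sum_le_sum fun i hi =>
          hφ.dist_le_mul _ (hs (hE.1 i hi).1) _ (hs (hE.1 i hi).2)
    _ = C * ∑ i ∈ Finset.range E.1, dist (f (E.2 i).1) (f (E.2 i).2) :=
        (Finset.mul_sum _ _ _).symm
    _ ≤ C * (η / (C + 1)) := by gcongr; exact (hd E hE hEδ).le
    _ < (C + 1) * (η / (C + 1)) := by gcongr; linarith
    _ = η := by field

lemma exists_lipschitzOnWith_of_hasDerivWithinAt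
    (hf : ∀ x ∈ Icc a b, HasDerivWithinAt f (f' x) (Icc a b) x)
    (hc : ContinuousOn f' (Icc a b)) : ∃ C, LipschitzOnWith C f (Icc a b) := by
  obtain ⟨C, hC⟩ := isCompact_Icc.exists_bound_of_continuousOn hc
  refine ⟨C.toNNReal, (convex_Icc a b).lipschitzOnWith_of_nnnorm_hasDerivWithin_le hf
    fun x hx => ?_⟩
  rw [← NNReal.coe_le_coe, coe_nnnorm]
  exact (hC x hx).trans (le_coe_toNNReal C)

lemma absolutelyContinuousOnInterval_of_hasDerivWithinAt (hab : a ≤ b)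
    (hf : ∀ x ∈ Icc a b, HasDerivWithinAt f (f' x) (Icc a b) x)
    (hc : ContinuousOn f' (Icc a b)) : AbsolutelyContinuousOnInterval f a b := by
  obtain ⟨C, hC⟩ := exists_lipschitzOnWith_of_hasDerivWithinAt hf hc
  rw [← uIcc_of_le hab] at hC
  exact hC.absolutelyContinuousOnInterval

lemma AbsolutelyContinuousOnInterval.comp_of_hasDerivAt
    (hφ : ∀ t, HasDerivAt φ (φ' t) t) (hc : Continuous φ')
    (hf : AbsolutelyContinuousOnInterval f a b) :
    AbsolutelyContinuousOnInterval (fun x => φ (f x)) a b := by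
  obtain ⟨V, hV⟩ := isCompact_uIcc.exists_bound_of_continuousOn hf.continuousOn
  obtain ⟨C, hC⟩ := exists_lipschitzOnWith_of_hasDerivWithinAt (a := -V) (b := V)
    (fun x _ => (hφ x).hasDerivWithinAt) hc.continuousOn
  exact hf.lipschitzOnWith_comp hC fun x hx => abs_le.1 (hV x hx)

lemma AbsolutelyContinuousOnInterval.integrableOn_and_setIntegral_eq_sub (hab : a ≤ b)
    (hf : AbsolutelyContinuousOnInterval f a b)
    (hd : ∀ᵐ x ∂(volume.restrict (Ioc a b)), HasDerivAt f (f' x) x) :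
    IntegrableOn f' (Ioc a b) ∧ ∫ x in Ioc a b, f' x = f b - f a := by
  have hae : deriv f =ᵐ[volume.restrict (Ioc a b)] f' := by
    filter_upwards [hd] with x hx using hx.deriv
  constructor
  · have := (intervalIntegrable_iff_integrableOn_Ioc_of_le hab).1 hf.intervalIntegrable_deriv
    exact this.congr hae
  · rw [← hf.integral_deriv_eq_sub, intervalIntegral.integral_of_le hab]
    exact (integral_congr_ae hae).symm

/-- The logarithmic power `tⁿ log t` is continuously differentiable on the whole line. -/
lemma hasDerivAt_pow_mul_log {n : ℕ} (hn : 2 ≤ n) (t : ℝ) :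
    HasDerivAt (fun t => t ^ n * log t) (t ^ (n - 2) * (n * (t * log t) + t)) t := by
  obtain ⟨m, rfl⟩ := Nat.exists_eq_add_of_le' hn
  rcases eq_or_ne t 0 with rfl | ht
  · rw [hasDerivAt_iff_tendsto_slope]
    have h1 : Continuous fun t : ℝ => t ^ m * (t * log t) := by
      have := Real.continuous_mul_log
      fun_prop
    have h2 := (h1.tendsto 0).mono_left (nhdsWithin_le_nhds (s := {0}ᶜ))
    simp only [zero_mul, mul_zero, add_zero] at h2 ⊢
    refine h2.congr' ?_
    filter_upwards [self_mem_nhdsWithin] with x hx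
    have hx : x ≠ 0 := hx
    simp only [slope, vsub_eq_sub, sub_zero, smul_eq_mul, log_zero, mul_zero]
    field
  · refine ((hasDerivAt_pow (m + 2) t).mul (hasDerivAt_log ht)).congr_deriv ?_
    simp only [Nat.add_sub_cancel, Nat.add_succ_sub_one, pow_add, Nat.cast_add]
    field

lemma continuous_pow_mul_log_deriv (n : ℕ) :
    Continuous fun t : ℝ => t ^ (n - 2) * (n * (t * log t) + t) := by
  have := Real.continuous_mul_log
  fun_prop

end AbsolutelyContinuous

section Admissible

variable {ε lam : ℝ} {v v' : ℝ → ℝ}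

namespace AdmE

lemma absolutelyContinuousOnInterval (A : AdmE ε lam v v') (hε : ε ≤ 1) :
    AbsolutelyContinuousOnInterval v ε 1 := by
  have h1 := ((intervalIntegrable_iff_integrableOn_Ioc_of_le
    hε).2 A.intg).absolutelyContinuousOnInterval_intervalIntegral (c := ε) left_mem_uIcc
  have h2 : LipschitzOnWith 0 (fun _ : ℝ => v ε) (uIcc ε 1) :=
    LipschitzWith.lipschitzOnWith (LipschitzWith.const _)
  have h3 := h2.absolutelyContinuousOnInterval.add h1
  rw [absolutelyContinuousOnInterval_iff] at h3 ⊢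
  intro η hη
  obtain ⟨δ, hδ, hd⟩ := h3 η hη
  refine ⟨δ, hδ, fun E hE hEδ => lt_of_eq_of_lt ?_ (hd E hE hEδ)⟩
  have key : ∀ x ∈ uIcc ε 1, v x = v ε + ∫ t in ε..x, v' t := fun x hx => by
    rw [uIcc_of_le hε] at hx
    rw [intervalIntegral.integral_of_le hx.1, ← A.ftc x hx]
  refine Finset.sum_congr rfl fun i hi => ?_
  rw [key _ (hE.1 i hi).1, key _ (hE.1 i hi).2]
  rfl

lemma continuousOn (A : AdmE ε lam v v') (hε : ε ≤ 1) : ContinuousOn v (Icc ε 1) := by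
  simpa [uIcc_of_le hε] using (A.absolutelyContinuousOnInterval hε).continuousOn

lemma ae_hasDerivAt (A : AdmE ε lam v v') (hε : ε ≤ 1) :
    ∀ᵐ x ∂(volume.restrict (Ioc ε 1)), HasDerivAt v (v' x) x := by
  have h1 := ((intervalIntegrable_iff_integrableOn_Ioc_of_le
    hε).2 A.intg).ae_hasDerivAt_integral
  rw [ae_restrict_iff' measurableSet_Ioc]
  have h2 : ∀ᵐ x : ℝ, x ≠ 1 := by simp [ae_iff]
  filter_upwards [h1, h2] with x hx hx1 hxI
  have h3 := (hx (by rw [uIcc_of_le hε]; exact Ioc_subset_Icc_self hxI) ε left_mem_uIcc).const_add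
    (v ε)
  refine h3.congr_of_eventuallyEq ?_
  filter_upwards [Ioo_mem_nhds hxI.1 (lt_of_le_of_ne hxI.2 hx1)] with y hy
  rw [intervalIntegral.integral_of_le hy.1.le, ← A.ftc y ⟨hy.1.le, hy.2.le⟩]

lemma strictMonoOn (A : AdmE ε lam v v') : StrictMonoOn v (Icc ε 1) := by
  intro x hx y hy hxy
  rw [A.ftc x hx, A.ftc y hy, ← Ioc_union_Ioc_eq_Ioc hx.1 hxy.le,
    setIntegral_union (Ioc_disjoint_Ioc_of_le le_rfl) measurableSet_Ioc
      (A.intg.mono_set (Ioc_subset_Ioc_right hx.2))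
      (A.intg.mono_set (Ioc_subset_Ioc hx.1 hy.2))]
  have hsub : Ioc x y ⊆ Ioc ε 1 := Ioc_subset_Ioc hx.1 hy.2
  have h1 : ∀ᵐ t ∂(volume.restrict (Ioc x y)), 0 < v' t := ae_restrict_of_ae_restrict_of_subset hsub
    A.derivPos
  have h2 : 0 < ∫ t in Ioc x y, v' t := by
    refine (integral_nonneg_of_ae (h1.mono fun _ h => h.le)).lt_of_ne' fun h0 => ?_
    rw [integral_eq_zero_iff_of_nonneg_ae (h1.mono fun _ h => h.le) (A.intg.mono_set hsub)] at h0
    have h3 : ∀ᵐ t ∂(volume.restrict (Ioc x y)), False := by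
      filter_upwards [h0, h1] with t ht ht' using ht'.ne' ht
    rw [eventually_false_iff_eq_bot, ae_eq_bot, Measure.restrict_eq_zero, Real.volume_Ioc,
      ENNReal.ofReal_eq_zero] at h3
    linarith
  linarith

lemma nonneg (A : AdmE ε lam v v') {x : ℝ} (hx : x ∈ Icc ε 1) : 0 ≤ v x :=
  A.c0.trans (A.strictMonoOn.monotoneOn ⟨le_rfl, hx.1.trans hx.2⟩ hx hx.1)

lemma pos (A : AdmE ε lam v v') {x : ℝ} (hx : x ∈ Ioc ε 1) : 0 < v x :=
  A.c0.trans_lt (A.strictMonoOn ⟨le_rfl, hx.1.le.trans hx.2⟩ (Ioc_subset_Icc_self hx) hx.1)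

end AdmE

end Admissible

section Calibration

/-- A smooth positive solution of the modified equilibrium equation on `[ε, 1]`, in the first-order
form with `q = κ (R ρ / U)^(n-1) + h' (ρ (U / R)^(n-1))`. -/
structure Extremal (n : ℕ) (κ : ℝ) (h' : ℝ → ℝ) (ε : ℝ) (U ρ q : ℝ → ℝ) : Prop where
  pos : ∀ R ∈ Icc ε 1, 0 < U R
  deriv_pos : ∀ R ∈ Icc ε 1, 0 < ρ R
  hasDeriv : ∀ R ∈ Icc ε 1, HasDerivWithinAt U (ρ R) (Icc ε 1) R
  continuousOn_deriv : ContinuousOn ρ (Icc ε 1)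
  hasDeriv_q : ∀ R ∈ Icc ε 1,
    HasDerivWithinAt q (κ * ((n : ℝ) - 1) / R * (1 - (R * ρ R / U R) ^ n)) (Icc ε 1) R
  q_eq : ∀ R ∈ Icc ε 1,
    q R = κ * (R * ρ R / U R) ^ (n - 1) + h' (ρ R * (U R / R) ^ (n - 1))

/-- The integrand of the modified energy. -/
def energyDensity (n : ℕ) (κ : ℝ) (h v v' : ℝ → ℝ) (R : ℝ) : ℝ :=
  R ^ (n - 1) * PhiHat n κ h (v' R) (v R / R)

/-- The boundary term of the calibration. -/
def calib (n : ℕ) (κ : ℝ) (q v : ℝ → ℝ) (R : ℝ) : ℝ :=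
  1 / n * (q R * v R ^ n) +
    κ * ((n : ℝ) - 1) / n * (v R ^ n * log (v R) - v R ^ n * log R)

/-- The derivative of `calib`. -/
def calibDeriv (n : ℕ) (κ : ℝ) (q q' v v' : ℝ → ℝ) (R : ℝ) : ℝ :=
  1 / n * (q' R * v R ^ n + q R * (n * v R ^ (n - 1) * v' R)) +
    κ * ((n : ℝ) - 1) / n * (v R ^ (n - 2) * (n * (v R * log (v R)) + v R) * v' R -
      (n * v R ^ (n - 1) * v' R * log R + v R ^ n * R⁻¹))

variable {n : ℕ} {κ ε lam : ℝ} {h h' h'' U ρ q v v' : ℝ → ℝ}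

lemma energyDensity_eq (hn : 2 ≤ n) {q' : ℝ → ℝ} {R P D' : ℝ} (hR : 0 < R) (hv : 0 < v R)
    (hq' : q' R = κ * ((n : ℝ) - 1) / R * (1 - P ^ n)) (hq : q R = κ * P ^ (n - 1) + D') :
    energyDensity n κ h v v' R = calibDeriv n κ q q' v v' R +
      κ / n / R * ((R * v' R) ^ n + ((n : ℝ) - 1) * (P * v R) ^ n -
        n * (R * v' R) * (P * v R) ^ (n - 1)) +
      R ^ (n - 1) * (h (v' R * (v R / R) ^ (n - 1)) - D' * (v' R * (v R / R) ^ (n - 1))) := by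
  obtain ⟨m, rfl⟩ := Nat.exists_eq_add_of_le' hn
  have h1 : m + 2 - 1 = m + 1 := rfl
  have h2 : m + 2 - 2 = m := rfl
  unfold energyDensity calibDeriv PhiHat
  rw [hq', hq, log_div hv.ne' hR.ne', h1, h2]
  generalize h (v' R * (v R / R) ^ (m + 1)) = H
  generalize log (v R) = l
  generalize log R = k
  generalize v R = y at *
  generalize v' R = x
  have hn0 : ((m + 2 : ℕ) : ℝ) ≠ 0 := by positivity
  generalize ((m + 2 : ℕ) : ℝ) = N at *
  simp only [div_pow, mul_pow, pow_succ]
  field_simp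
  ring

lemma GoodH.bregman_nonneg (hh : GoodH h h' h'') {x y : ℝ} (hx : 0 < x) (hy : 0 < y) :
    h y - h' y * y ≤ h x - h' y * x ∧ (h y - h' y * y = h x - h' y * x → x = y) := by
  have key : x ≠ y → h y - h' y * y < h x - h' y * x := by
    intro hxy
    have hd : ∀ t > 0, HasDerivAt (fun t => h t - h' y * t) (h' t - h' y) t := fun t ht =>
      ((hh.deriv1 t ht).sub ((hasDerivAt_id t).const_mul (h' y))).congr_deriv (by simp)
    rcases lt_or_gt_of_ne hxy with hlt | hlt
    · have hsub : ∀ t ∈ Icc x y, 0 < t := fun t ht => hx.trans_le ht.1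
      refine strictAntiOn_of_deriv_neg (convex_Icc x y) (f := fun t => h t - h' y * t)
        (fun t ht => (hd t (hsub t ht)).continuousAt.continuousWithinAt)
        (fun t ht => ?_) (left_mem_Icc.2 hlt.le) (right_mem_Icc.2 hlt.le) hlt
      rw [interior_Icc] at ht
      have h0 := hsub t (Ioo_subset_Icc_self ht)
      rw [(hd t h0).deriv]
      exact sub_neg.2 (hh.deriv_strictMonoOn h0 hy ht.2)
    · have hsub : ∀ t ∈ Icc y x, 0 < t := fun t ht => hy.trans_le ht.1
      refine strictMonoOn_of_deriv_pos (convex_Icc y x) (f := fun t => h t - h' y * t)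
        (fun t ht => (hd t (hsub t ht)).continuousAt.continuousWithinAt)
        (fun t ht => ?_) (left_mem_Icc.2 hlt.le) (right_mem_Icc.2 hlt.le) hlt
      rw [interior_Icc] at ht
      have h0 := hsub t (Ioo_subset_Icc_self ht)
      rw [(hd t h0).deriv]
      exact sub_pos.2 (hh.deriv_strictMonoOn hy h0 ht.1)
  by_cases hxy : x = y
  · subst hxy; simp
  · exact ⟨(key hxy).le, fun he => absurd he (key hxy).ne⟩

namespace Extremal

/-- The part of the energy density of an extremal that does not depend on the competitor. -/
def rest (n : ℕ) (h h' U ρ : ℝ → ℝ) (R : ℝ) : ℝ :=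
  R ^ (n - 1) * (h (ρ R * (U R / R) ^ (n - 1)) -
    h' (ρ R * (U R / R) ^ (n - 1)) * (ρ R * (U R / R) ^ (n - 1)))

/-- The right-hand side of the equation for `q`. -/
def qDeriv (n : ℕ) (κ : ℝ) (U ρ : ℝ → ℝ) (R : ℝ) : ℝ :=
  κ * ((n : ℝ) - 1) / R * (1 - (R * ρ R / U R) ^ n)

lemma le_energyDensity (hn : 2 ≤ n) (hκ : 0 < κ) (hh : GoodH h h' h'')
    (E : Extremal n κ h' ε U ρ q) {R : ℝ} (hε : 0 < ε) (hR : R ∈ Icc ε 1) (hv : 0 < v R)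
    (hv' : 0 < v' R) :
    calibDeriv n κ q (qDeriv n κ U ρ) v v' R + rest n h h' U ρ R ≤ energyDensity n κ h v v' R ∧
    (calibDeriv n κ q (qDeriv n κ U ρ) v v' R + rest n h h' U ρ R = energyDensity n κ h v v' R →
      v' R * v R ^ (n - 1) = ρ R * U R ^ (n - 1)) := by
  have hR0 := hε.trans_le hR.1
  have hU := E.pos R hR
  have hρ := E.deriv_pos R hR
  rw [energyDensity_eq (q' := qDeriv n κ U ρ) hn hR0 hv rfl (E.q_eq R hR), rest]
  have h1 := PolarSol.mul_pow_pred_le hn (x := R * v' R) (y := R * ρ R / U R * v R)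
    (by positivity) (by positivity)
  have h2 := hh.bregman_nonneg (x := v' R * (v R / R) ^ (n - 1))
    (y := ρ R * (U R / R) ^ (n - 1)) (by positivity) (by positivity)
  have h3 : 0 ≤ κ / n / R * ((R * v' R) ^ n + ((n : ℝ) - 1) * (R * ρ R / U R * v R) ^ n -
        n * (R * v' R) * (R * ρ R / U R * v R) ^ (n - 1)) :=
    mul_nonneg (by positivity) (by linarith)
  have h4 : 0 < R ^ (n - 1) := by positivity
  have h5 := mul_le_mul_of_nonneg_left h2.1 h4.le
  refine ⟨by linarith, fun he => ?_⟩
  have h6 := h2.2 (mul_left_cancel₀ h4.ne' (le_antisymm h5 (by linarith)))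
  rw [div_pow, div_pow] at h6
  field_simp at h6
  exact h6

lemma energyDensity_eq_self (hn : 2 ≤ n) (E : Extremal n κ h' ε U ρ q) {R : ℝ} (hε : 0 < ε)
    (hR : R ∈ Icc ε 1) :
    energyDensity n κ h U ρ R =
      calibDeriv n κ q (qDeriv n κ U ρ) U ρ R + rest n h h' U ρ R := by
  have hR0 := hε.trans_le hR.1
  have hU := E.pos R hR
  rw [energyDensity_eq (q' := qDeriv n κ U ρ) hn hR0 hU rfl (E.q_eq R hR), rest,
    div_mul_cancel₀ _ hU.ne']
  have : (R * ρ R) ^ n = R * ρ R * (R * ρ R) ^ (n - 1) := by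
    rw [← pow_succ']; congr 1; omega
  rw [this]
  ring

lemma continuousOn (E : Extremal n κ h' ε U ρ q) : ContinuousOn U (Icc ε 1) :=
  fun R hR => (E.hasDeriv R hR).continuousWithinAt

lemma continuousOn_qDeriv (hε : 0 < ε) (E : Extremal n κ h' ε U ρ q) :
    ContinuousOn (qDeriv n κ U ρ) (Icc ε 1) := by
  have h1 := E.continuousOn
  have h2 := E.continuousOn_deriv
  unfold qDeriv
  refine ContinuousOn.mul (continuousOn_const.div continuousOn_id fun R hR =>
    (hε.trans_le hR.1).ne') (continuousOn_const.sub (((continuousOn_id.mul h2).div h1 fun R hR =>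
      (E.pos R hR).ne').pow n))

lemma continuousOn_rest (hε : 0 < ε) (hh : GoodH h h' h'') (E : Extremal n κ h' ε U ρ q) :
    ContinuousOn (rest n h h' U ρ) (Icc ε 1) := by
  have hD : ContinuousOn (fun R => ρ R * (U R / R) ^ (n - 1)) (Icc ε 1) :=
    E.continuousOn_deriv.mul ((E.continuousOn.div continuousOn_id fun R hR =>
      (hε.trans_le hR.1).ne').pow _)
  have hpos : ∀ R ∈ Icc ε 1, 0 < ρ R * (U R / R) ^ (n - 1) := fun R hR => by
    have := E.pos R hR
    have := E.deriv_pos R hR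
    have := hε.trans_le hR.1
    positivity
  have h1 : ContinuousOn h (Ioi 0) := fun d hd => (hh.deriv1 d hd).continuousAt.continuousWithinAt
  exact (continuousOn_id.pow _).mul ((h1.comp hD hpos).sub
    ((hh.continuousOn_deriv.comp hD hpos).mul hD))

/-- An extremal is an admissible deformation for its own boundary value. -/
lemma admE (hε : ε ≤ 1) (E : Extremal n κ h' ε U ρ q) : AdmE ε (U 1) U ρ where
  intg := (E.continuousOn_deriv.integrableOn_compact isCompact_Icc).mono_set Ioc_subset_Icc_self
  ftc R hR := by
    have := intervalIntegral.integral_eq_sub_of_hasDeriv_right_of_le hR.1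
      (E.continuousOn.mono (Icc_subset_Icc_right hR.2)) (f' := ρ)
      (fun x hx => ((E.hasDeriv x ⟨hx.1.le, hx.2.le.trans hR.2⟩).hasDerivAt
        (Icc_mem_nhds hx.1 (hx.2.trans_le hR.2))).hasDerivWithinAt)
      ((intervalIntegrable_iff_integrableOn_Ioc_of_le hR.1).2
        ((E.continuousOn_deriv.integrableOn_compact isCompact_Icc).mono_set
          (Ioc_subset_Icc_self.trans (Icc_subset_Icc_right hR.2))))
    rw [intervalIntegral.integral_of_le hR.1] at this
    linarith
  derivPos := (ae_restrict_iff' measurableSet_Ioc).2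
    (Eventually.of_forall fun R hR => E.deriv_pos R (Ioc_subset_Icc_self hR))
  bc := rfl
  c0 := (E.pos ε ⟨le_rfl, hε⟩).le

/-- The calibration term of an admissible deformation satisfies the fundamental theorem of
calculus. -/
lemma integrableOn_calibDeriv (hn : 2 ≤ n) (hε : 0 < ε) (E : Extremal n κ h' ε U ρ q)
    (A : AdmE ε lam v v') {X : ℝ} (hX : X ∈ Icc ε 1) :
    IntegrableOn (calibDeriv n κ q (qDeriv n κ U ρ) v v') (Ioc ε X) ∧
      ∫ R in Ioc ε X, calibDeriv n κ q (qDeriv n κ U ρ) v v' R =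
        calib n κ q v X - calib n κ q v ε := by
  have hε1 := hX.1.trans hX.2
  have hv := A.absolutelyContinuousOnInterval hε1
  have hq := absolutelyContinuousOnInterval_of_hasDerivWithinAt hε1 E.hasDeriv_q
    (E.continuousOn_qDeriv hε)
  have hlog := absolutelyContinuousOnInterval_of_hasDerivWithinAt (f := log)
    (f' := fun x => x⁻¹) hε1
    (fun x hx => (hasDerivAt_log (hε.trans_le hx.1).ne').hasDerivWithinAt)
    (continuousOn_id.inv₀ fun x hx => (hε.trans_le hx.1).ne')
  have hpow : AbsolutelyContinuousOnInterval (fun x => v x ^ n) ε 1 :=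
    hv.comp_of_hasDerivAt (φ := fun t => t ^ n) (fun t => hasDerivAt_pow n t)
      (by fun_prop)
  have hpl : AbsolutelyContinuousOnInterval (fun x => v x ^ n * log (v x)) ε 1 :=
    hv.comp_of_hasDerivAt (φ := fun t => t ^ n * log t) (hasDerivAt_pow_mul_log hn)
      (continuous_pow_mul_log_deriv n)
  have hac : AbsolutelyContinuousOnInterval (calib n κ q v) ε 1 :=
    ((hq.mul hpow).const_mul (1 / (n : ℝ))).add
      ((hpl.sub (hpow.mul hlog)).const_mul (κ * ((n : ℝ) - 1) / n))
  refine (hac.mono ?_).integrableOn_and_setIntegral_eq_sub hX.1 ?_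
  · rw [uIcc_of_le hX.1, uIcc_of_le hε1]
    exact Icc_subset_Icc_right hX.2
  refine ae_restrict_of_ae_restrict_of_subset (Ioc_subset_Ioc_right hX.2) ?_
  have h2 : ∀ᵐ x ∂(volume.restrict (Ioc ε 1)), x ≠ 1 := ae_restrict_of_ae (by simp [ae_iff])
  filter_upwards [A.ae_hasDerivAt hε1, h2, ae_restrict_mem measurableSet_Ioc] with x hx hx1 hxI
  have hx0 := hε.trans hxI.1
  have hqx := (E.hasDeriv_q x (Ioc_subset_Icc_self hxI)).hasDerivAt
    (Icc_mem_nhds hxI.1 (lt_of_le_of_ne hxI.2 hx1))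
  have h3 : HasDerivAt (fun x => v x ^ n) (n * v x ^ (n - 1) * v' x) x := hx.pow n
  have h4 : HasDerivAt (fun x => v x ^ n * log (v x))
      (v x ^ (n - 2) * (n * (v x * log (v x)) + v x) * v' x) x :=
    (hasDerivAt_pow_mul_log hn (v x)).comp x hx
  exact ((hqx.mul h3).const_mul (1 / (n : ℝ))).add
      ((h4.sub (h3.mul (hasDerivAt_log hx0.ne'))).const_mul (κ * ((n : ℝ) - 1) / n))

end Extremal

end Calibration

section FieldOfExtremals

variable {n : ℕ} {κ ε lam X : ℝ} {h h' h'' U ρ q v v' : ℝ → ℝ}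

lemma AdmE.ae_pos (A : AdmE ε lam v v') :
    ∀ᵐ R ∂(volume.restrict (Ioc ε 1)), R ∈ Icc ε 1 ∧ 0 < v R ∧ 0 < v' R := by
  filter_upwards [A.derivPos, ae_restrict_mem measurableSet_Ioc] with R hR hRI
  exact ⟨Ioc_subset_Icc_self hRI, A.pos hRI, hR⟩

namespace Extremal

/-- The stress `T̂` at the inner boundary. -/
def innerStress (n : ℕ) (κ ε : ℝ) (U q : ℝ → ℝ) : ℝ :=
  q ε + κ * ((n : ℝ) - 1) * (1 / n + log (U ε / ε))

lemma integrableOn_rest (hε : 0 < ε) (hh : GoodH h h' h'') (E : Extremal n κ h' ε U ρ q)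
    (hX : X ∈ Icc ε 1) : IntegrableOn (rest n h h' U ρ) (Ioc ε X) :=
  ((E.continuousOn_rest hε hh).integrableOn_compact isCompact_Icc).mono_set
    (Ioc_subset_Icc_self.trans (Icc_subset_Icc_right hX.2))

lemma integrableOn_self (hn : 2 ≤ n) (hh : GoodH h h' h'') (hε : 0 < ε)
    (E : Extremal n κ h' ε U ρ q) (hX : X ∈ Icc ε 1) :
    IntegrableOn (energyDensity n κ h U ρ) (Ioc ε X) ∧
      ∫ R in Ioc ε X, energyDensity n κ h U ρ R =
        calib n κ q U X - calib n κ q U ε + ∫ R in Ioc ε X, rest n h h' U ρ R := by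
  obtain ⟨h1, h2⟩ := E.integrableOn_calibDeriv hn hε (E.admE (hX.1.trans hX.2)) hX
  have h3 := E.integrableOn_rest hε hh hX
  have h4 : ∀ R ∈ Ioc ε X, energyDensity n κ h U ρ R =
      calibDeriv n κ q (qDeriv n κ U ρ) U ρ R + rest n h h' U ρ R := fun R hR =>
    E.energyDensity_eq_self hn hε ⟨hR.1.le, hR.2.trans hX.2⟩
  constructor
  · exact (integrableOn_congr_fun h4 measurableSet_Ioc).2 (h1.add h3)
  · rw [setIntegral_congr_fun measurableSet_Ioc h4, integral_add h1 h3, h2]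

/-- The field inequality on `[ε, X]` for a deformation that meets the extremal at `X`. -/
lemma integral_self_le (hn : 2 ≤ n) (hκ : 0 < κ) (hh : GoodH h h' h'') (hε : 0 < ε)
    (E : Extremal n κ h' ε U ρ q) (A : AdmE ε lam v v') (hX : X ∈ Icc ε 1) (hUv : v X = U X)
    (hFi : IntegrableOn (energyDensity n κ h v v') (Ioc ε X)) :
    calib n κ q U ε - calib n κ q v ε + ∫ R in Ioc ε X, energyDensity n κ h U ρ R ≤
      ∫ R in Ioc ε X, energyDensity n κ h v v' R := by
  obtain ⟨h1, h2⟩ := E.integrableOn_calibDeriv hn hε A hX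
  have h3 := E.integrableOn_rest hε hh hX
  have h4 : ∫ R in Ioc ε X, (calibDeriv n κ q (qDeriv n κ U ρ) v v' R + rest n h h' U ρ R) ≤
      ∫ R in Ioc ε X, energyDensity n κ h v v' R := by
    refine integral_mono_ae (h1.add h3) hFi ?_
    filter_upwards [ae_restrict_of_ae_restrict_of_subset (Ioc_subset_Ioc_right hX.2) A.ae_pos]
      with R hR using (E.le_energyDensity hn hκ hh hε hR.1 hR.2.1 hR.2.2).1
  rw [integral_add h1 h3, h2] at h4
  rw [(E.integrableOn_self hn hh hε hX).2]
  have : calib n κ q v X = calib n κ q U X := by rw [calib, calib, hUv]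
  linarith

lemma calib_sub_calib_ge (hn : 2 ≤ n) (hκ : 0 < κ) (hε : 0 < ε) (hU : 0 < U ε) (hv : 0 ≤ v ε) :
    1 / n * (innerStress n κ ε U q * (U ε ^ n - v ε ^ n) -
      κ * ((n : ℝ) - 1) / n * ((U ε ^ n - v ε ^ n) ^ 2 / U ε ^ n)) ≤
      calib n κ q U ε - calib n κ q v ε := by
  have hn' : (2 : ℝ) ≤ n := by exact_mod_cast hn
  have hc : 0 < κ * ((n : ℝ) - 1) / n := by
    have : (0 : ℝ) < n - 1 := by linarith
    positivity
  have hb' : 0 < U ε ^ n := by positivity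
  unfold innerStress calib
  rw [log_div hU.ne' hε.ne']
  have key : v ε ^ n - v ε ^ n * (v ε ^ n / U ε ^ n) ≤ v ε ^ n * (n * (log (U ε) - log (v ε))) := by
    rcases hv.eq_or_lt with h0 | h0
    · rw [← h0, zero_pow (by omega)]; simp
    · have hb : 0 < v ε ^ n := by positivity
      have h1 := one_sub_inv_le_log_of_pos (x := U ε ^ n / v ε ^ n) (by positivity)
      rw [log_div hb'.ne' hb.ne', log_pow, log_pow, inv_div] at h1
      have := mul_le_mul_of_nonneg_left h1 hb.le
      linarith
  generalize v ε ^ n = b at *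
  generalize U ε ^ n = b' at *
  have hk := mul_le_mul_of_nonneg_left key (show 0 ≤ κ * ((n : ℝ) - 1) / n * (1 / n) by positivity)
  have hsq : (b' - b) ^ 2 / b' = b' - 2 * b + b * (b / b') := by field
  rw [hsq]
  have e1 : κ * ((n : ℝ) - 1) * (1 / n + (log (U ε) - log ε)) =
      κ * ((n : ℝ) - 1) / n * (1 + n * (log (U ε) - log ε)) := by field
  rw [e1]
  generalize κ * ((n : ℝ) - 1) / n = c at *
  have e2 : (1 / n * (n : ℝ)) = 1 := by field
  have e3 : ∀ z : ℝ, 1 / n * (n * z) = z := fun z => by rw [← mul_assoc, e2, one_mul]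
  have e4 : c * (1 / n) * (b * (n * (log (U ε) - log (v ε)))) =
      c * b * (log (U ε) - log (v ε)) := by rw [← e3 (c * b * (log (U ε) - log (v ε)))]; ring
  have e5 : 1 / n * (c * (n * (log (U ε) - log ε)) * (b' - b)) =
      c * (log (U ε) - log ε) * (b' - b) := by
    rw [← e3 (c * (log (U ε) - log ε) * (b' - b))]; ring
  linarith

end Extremal

/-- The energies of the admissible deformations with `v(ε)ⁿ = b` are bounded below by `M`. -/
def LowerBound (n : ℕ) (κ ε lam : ℝ) (h : ℝ → ℝ) (b M : ℝ) : Prop :=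
  ∀ v v' : ℝ → ℝ, AdmE ε lam v v' → IntegrableOn (energyDensity n κ h v v') (Ioc ε 1) →
    v ε ^ n = b → M ≤ ∫ R in Ioc ε 1, energyDensity n κ h v v' R

/-- Replacing an admissible deformation by an extremal up to a crossing point. -/
lemma AdmE.splice (hε : ε ≤ 1) (E : Extremal n κ h' ε U ρ q) (A : AdmE ε lam v v')
    (hX : X ∈ Icc ε 1) (hUv : v X = U X) :
    AdmE ε lam (fun R => if R ≤ X then U R else v R) (fun R => if R ≤ X then ρ R else v' R) := by
  have B := E.admE hε
  have hsub : Ioc ε X ⊆ Ioc ε 1 := Ioc_subset_Ioc_right hX.2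
  have h1 : EqOn (fun R => if R ≤ X then ρ R else v' R) ρ (Ioc ε X) := fun R hR => if_pos hR.2
  have h2 : EqOn (fun R => if R ≤ X then ρ R else v' R) v' (Ioc X 1) :=
    fun R hR => if_neg hR.1.not_ge
  have i1 : IntegrableOn (fun R => if R ≤ X then ρ R else v' R) (Ioc ε X) :=
    (integrableOn_congr_fun h1 measurableSet_Ioc).2 (B.intg.mono_set hsub)
  have i2 : IntegrableOn (fun R => if R ≤ X then ρ R else v' R) (Ioc X 1) :=
    (integrableOn_congr_fun h2 measurableSet_Ioc).2 (A.intg.mono_set (Ioc_subset_Ioc_left hX.1))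
  refine ⟨?_, fun R hR => ?_, ?_, ?_, ?_⟩
  · rw [← Ioc_union_Ioc_eq_Ioc hX.1 hX.2]
    exact i1.union i2
  · rw [if_pos hX.1]
    rcases le_or_gt R X with hRX | hRX
    · rw [if_pos hRX, setIntegral_congr_fun measurableSet_Ioc
        (h1.mono (Ioc_subset_Ioc_right hRX))]
      exact B.ftc R hR
    · have hm : Ioc X R ⊆ Ioc X 1 := Ioc_subset_Ioc_right hR.2
      rw [if_neg hRX.not_ge, ← Ioc_union_Ioc_eq_Ioc hX.1 hRX.le,
        setIntegral_union (Ioc_disjoint_Ioc_of_le le_rfl) measurableSet_Ioc i1 (i2.mono_set hm),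
        setIntegral_congr_fun measurableSet_Ioc h1,
        setIntegral_congr_fun measurableSet_Ioc (h2.mono hm), ← add_assoc, ← B.ftc X hX, ← hUv,
        A.ftc X hX, A.ftc R hR, ← Ioc_union_Ioc_eq_Ioc hX.1 hRX.le,
        setIntegral_union (Ioc_disjoint_Ioc_of_le le_rfl) measurableSet_Ioc
          (A.intg.mono_set hsub) (A.intg.mono_set (Ioc_subset_Ioc hX.1 hR.2)), add_assoc]
  · filter_upwards [A.derivPos, B.derivPos] with R h3 h4
    split_ifs <;> assumption
  · by_cases hX1 : (1 : ℝ) ≤ X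
    · have : X = 1 := le_antisymm hX.2 hX1
      rw [if_pos hX1, ← A.bc, ← this, hUv]
    · rw [if_neg hX1, A.bc]
  · rw [if_pos hX.1]
    exact B.c0

lemma exists_crossing (hn : 2 ≤ n) (hε : ε ≤ 1) (E : Extremal n κ h' ε U ρ q)
    (A : AdmE ε lam v v') (hs : 0 ≤ (U ε ^ n - v ε ^ n) * (lam - U 1)) :
    ∃ X ∈ Icc ε 1, v X = U X := by
  have hc : ContinuousOn (fun R => U R - v R) (uIcc ε 1) := by
    rw [uIcc_of_le hε]
    exact E.continuousOn.sub (A.continuousOn hε)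
  have hU0 := (E.pos ε ⟨le_rfl, hε⟩).le
  have hs' : (U ε - v ε) * (U 1 - v 1) ≤ 0 := by
    rw [A.bc]
    rcases lt_trichotomy (U ε) (v ε) with hl | hl | hl
    · have := pow_lt_pow_left₀ hl hU0 (by omega : n ≠ 0)
      nlinarith
    · rw [hl]; simp
    · have := pow_lt_pow_left₀ hl A.c0 (by omega : n ≠ 0)
      nlinarith
  have h0 : (0 : ℝ) ∈ uIcc (U ε - v ε) (U 1 - v 1) := by
    rw [mem_uIcc]
    rcases mul_nonpos_iff.1 hs' with h | h
    · exact Or.inr ⟨h.2, h.1⟩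
    · exact Or.inl h
  obtain ⟨X, hX, hX0⟩ := intermediate_value_uIcc hc h0
  rw [uIcc_of_le hε] at hX
  exact ⟨X, hX, (sub_eq_zero.1 hX0).symm⟩

/-- Transfer of a lower bound along an extremal. -/
lemma LowerBound.step (hn : 2 ≤ n) (hκ : 0 < κ) (hh : GoodH h h' h'') (hε : 0 < ε) (hε1 : ε ≤ 1)
    (E : Extremal n κ h' ε U ρ q) {b M : ℝ} (hs : 0 ≤ (U ε ^ n - b) * (lam - U 1))
    (hM : LowerBound n κ ε lam h (U ε ^ n) M) :
    LowerBound n κ ε lam h b (M + 1 / n * (Extremal.innerStress n κ ε U q * (U ε ^ n - b) -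
      κ * ((n : ℝ) - 1) / n * ((U ε ^ n - b) ^ 2 / U ε ^ n))) := by
  rintro v v' A hFi rfl
  obtain ⟨X, hX, hUv⟩ := exists_crossing hn hε1 E A hs
  have hsub : Ioc ε X ⊆ Ioc ε 1 := Ioc_subset_Ioc_right hX.2
  have hsub' : Ioc X 1 ⊆ Ioc ε 1 := Ioc_subset_Ioc_left hX.1
  have h1 := E.integral_self_le hn hκ hh hε A hX hUv (hFi.mono_set hsub)
  have h2 := Extremal.calib_sub_calib_ge (q := q) hn hκ hε (E.pos ε ⟨le_rfl, hε1⟩) A.c0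
  have e1 : EqOn (energyDensity n κ h (fun R => if R ≤ X then U R else v R)
      (fun R => if R ≤ X then ρ R else v' R)) (energyDensity n κ h U ρ) (Ioc ε X) := fun R hR => by
    simp only [energyDensity, if_pos hR.2]
  have e2 : EqOn (energyDensity n κ h (fun R => if R ≤ X then U R else v R)
      (fun R => if R ≤ X then ρ R else v' R)) (energyDensity n κ h v v') (Ioc X 1) :=
    fun R hR => by simp only [energyDensity, if_neg hR.1.not_ge]
  have i1 := (integrableOn_congr_fun e1 measurableSet_Ioc).2 (E.integrableOn_self hn hh hε hX).1
  have i2 := (integrableOn_congr_fun e2 measurableSet_Ioc).2 (hFi.mono_set hsub')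
  have h3 := hM _ _ (A.splice hε1 E hX hUv)
    (by rw [← Ioc_union_Ioc_eq_Ioc hX.1 hX.2]; exact i1.union i2) (by rw [if_pos hX.1])
  rw [← Ioc_union_Ioc_eq_Ioc hX.1 hX.2, setIntegral_union (Ioc_disjoint_Ioc_of_le le_rfl)
    measurableSet_Ioc i1 i2, setIntegral_congr_fun measurableSet_Ioc e1,
    setIntegral_congr_fun measurableSet_Ioc e2] at h3
  rw [← Ioc_union_Ioc_eq_Ioc hX.1 hX.2, setIntegral_union (Ioc_disjoint_Ioc_of_le le_rfl)
    measurableSet_Ioc (hFi.mono_set hsub) (hFi.mono_set hsub')]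
  linarith

lemma LowerBound.mono {b M M' : ℝ} (hM : LowerBound n κ ε lam h b M) (hle : M' ≤ M) :
    LowerBound n κ ε lam h b M' := fun v v' A hi hb => hle.trans (hM v v' A hi hb)

/-- An extremal minimizes the energy among the deformations with the same inner radius. -/
lemma Extremal.lowerBound (hn : 2 ≤ n) (hκ : 0 < κ) (hh : GoodH h h' h'') (hε : 0 < ε)
    (hε1 : ε ≤ 1) (E : Extremal n κ h' ε U ρ q) (hU : U 1 = lam) :
    LowerBound n κ ε lam h (U ε ^ n) (∫ R in Ioc ε 1, energyDensity n κ h U ρ R) := by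
  intro v v' A hFi hb
  have hvU : v ε = U ε :=
    (pow_left_inj₀ A.c0 (E.pos ε ⟨le_rfl, hε1⟩).le (by omega)).1 hb
  have := E.integral_self_le hn hκ hh hε A ⟨hε1, le_rfl⟩ (A.bc.trans hU.symm) hFi
  have h2 : calib n κ q v ε = calib n κ q U ε := by rw [calib, calib, hvU]
  linarith

/-- Uniqueness of the minimizer with a given inner radius. -/
lemma Extremal.eqOn_of_integral_le (hn : 2 ≤ n) (hκ : 0 < κ) (hh : GoodH h h' h'') (hε : 0 < ε)
    (hε1 : ε ≤ 1) (E : Extremal n κ h' ε U ρ q) (hU : U 1 = lam) (A : AdmE ε lam v v')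
    (hFi : IntegrableOn (energyDensity n κ h v v') (Ioc ε 1)) (hvU : v ε = U ε)
    (hle : ∫ R in Ioc ε 1, energyDensity n κ h v v' R ≤
      ∫ R in Ioc ε 1, energyDensity n κ h U ρ R) : EqOn v U (Icc ε 1) := by
  have hX : (1 : ℝ) ∈ Icc ε 1 := ⟨hε1, le_rfl⟩
  obtain ⟨h1, h2⟩ := E.integrableOn_calibDeriv hn hε A hX
  have h3 := E.integrableOn_rest hε hh hX
  have hcε : calib n κ q v ε = calib n κ q U ε := by rw [calib, calib, hvU]
  have hc1 : calib n κ q v 1 = calib n κ q U 1 := by rw [calib, calib, A.bc, hU]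
  have h4 : ∀ᵐ R ∂(volume.restrict (Ioc ε 1)),
      0 ≤ energyDensity n κ h v v' R -
        (calibDeriv n κ q (qDeriv n κ U ρ) v v' R + rest n h h' U ρ R) := by
    filter_upwards [A.ae_pos] with R hR
    exact sub_nonneg.2 (E.le_energyDensity hn hκ hh hε hR.1 hR.2.1 hR.2.2).1
  have h5 : ∫ R in Ioc ε 1, (energyDensity n κ h v v' R -
      (calibDeriv n κ q (qDeriv n κ U ρ) v v' R + rest n h h' U ρ R)) = 0 := by
    refine le_antisymm ?_ (integral_nonneg_of_ae h4)
    have h13 : IntegrableOn (fun R => calibDeriv n κ q (qDeriv n κ U ρ) v v' R +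
      rest n h h' U ρ R) (Ioc ε 1) := h1.add h3
    rw [integral_sub hFi h13, integral_add h1 h3, h2]
    rw [(E.integrableOn_self hn hh hε hX).2] at hle
    linarith
  rw [integral_eq_zero_iff_of_nonneg_ae h4 (hFi.sub (h1.add h3))] at h5
  have hpow : ∀ {f f' : ℝ → ℝ}, AdmE ε lam f f' →
      AbsolutelyContinuousOnInterval (fun x => f x ^ n) ε 1 := fun B =>
    (B.absolutelyContinuousOnInterval hε1).comp_of_hasDerivAt (φ := fun t => t ^ n)
      (fun t => hasDerivAt_pow n t) (by fun_prop)
  have B : AdmE ε lam U ρ := hU ▸ E.admE hε1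
  have hac := (hpow A).sub (hpow B)
  intro X hX
  have h6 := (hac.mono (c := ε) (d := X) (by
    rw [uIcc_of_le hX.1, uIcc_of_le hε1]
    exact Icc_subset_Icc_right hX.2)).integrableOn_and_setIntegral_eq_sub
      (f' := fun _ => 0) hX.1 (by
      refine ae_restrict_of_ae_restrict_of_subset (Ioc_subset_Ioc_right hX.2) ?_
      filter_upwards [A.ae_pos, h5, A.ae_hasDerivAt hε1, B.ae_hasDerivAt hε1] with R hR h7 h8 h9
      have h10 := (E.le_energyDensity hn hκ hh hε hR.1 hR.2.1 hR.2.2).2 (sub_eq_zero.1 h7).symm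
      refine ((h8.pow n).sub (h9.pow n)).congr_deriv ?_
      linear_combination (n : ℝ) * h10)
  have h7 := h6.2
  simp only [integral_zero, Pi.sub_apply, hvU, sub_self, sub_zero] at h7
  exact (pow_left_inj₀ (A.nonneg hX) (E.pos X hX).le (by omega)).1 (sub_eq_zero.1 h7.symm)

end FieldOfExtremals

section PolarExtremal

variable {n : ℕ} {κ ε lam : ℝ} {h h' h'' w p ws ps : ℝ → ℝ}

lemma log_sub_log_mem_Icc (hε : 0 < ε) {R : ℝ} (hR : R ∈ Icc ε 1) :
    log R - log ε ∈ Icc 0 (-log ε) := by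
  have h1 := log_le_log hε hR.1
  have h2 := log_nonpos (hε.le.trans hR.1) hR.2
  constructor <;> linarith

lemma hasDerivWithinAt_comp_log {f : ℝ → ℝ} {f' : ℝ} (hε : 0 < ε) {R : ℝ} (hR : R ∈ Icc ε 1)
    (hf : HasDerivWithinAt f f' (Icc 0 (-log ε)) (log R - log ε)) :
    HasDerivWithinAt (fun R => f (log R - log ε)) (f' * R⁻¹) (Icc ε 1) R :=
  hf.comp R ((hasDerivAt_log (hε.trans_le hR.1).ne').sub_const _).hasDerivWithinAt
    fun _ hx => log_sub_log_mem_Icc hε hx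

lemma continuousOn_comp_log {f : ℝ → ℝ} (hε : 0 < ε)
    (hf : ContinuousOn f (Icc 0 (-log ε))) :
    ContinuousOn (fun R => f (log R - log ε)) (Icc ε 1) :=
  hf.comp ((continuousOn_log.mono fun _ hR => (hε.trans_le hR.1).ne').sub continuousOn_const)
    fun _ hR => log_sub_log_mem_Icc hε hR

namespace PolarSol

/-- A solution in logarithmic coordinates yields a deformation of the annulus. -/
def toRadial (ε : ℝ) (w : ℝ → ℝ) (R : ℝ) : ℝ := R * exp (w (log R - log ε))

/-- The derivative of `toRadial`. -/
def toRadialDeriv (ε : ℝ) (w p : ℝ → ℝ) (R : ℝ) : ℝ :=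
  p (log R - log ε) * exp (w (log R - log ε))

lemma mul_toRadialDeriv_div (w p : ℝ → ℝ) {R : ℝ} (hR : 0 < R) :
    R * toRadialDeriv ε w p R / toRadial ε w R = p (log R - log ε) := by
  unfold toRadialDeriv toRadial
  field_simp

lemma toRadialDeriv_mul_pow (hn : 2 ≤ n) (w p : ℝ → ℝ) {R : ℝ} (hR : 0 < R) :
    toRadialDeriv ε w p R * (toRadial ε w R / R) ^ (n - 1) =
      p (log R - log ε) * exp (n * w (log R - log ε)) := by
  unfold toRadialDeriv toRadial
  rw [mul_div_cancel_left₀ _ hR.ne', mul_assoc, ← pow_succ', exp_nat_mul]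
  congr 2
  omega

lemma hasDeriv_toRadial (hε : 0 < ε) (S : PolarSol n κ h' (-log ε) w p) {R : ℝ}
    (hR : R ∈ Icc ε 1) :
    HasDerivWithinAt (toRadial ε w) (toRadialDeriv ε w p R) (Icc ε 1) R := by
  have hR0 := hε.trans_le hR.1
  refine ((hasDerivWithinAt_id R _).mul (hasDerivWithinAt_comp_log hε hR
    (S.hasDeriv_w _ (log_sub_log_mem_Icc hε hR))).exp).congr_deriv ?_
  simp only [id, toRadialDeriv]
  field

lemma extremal (hn : 2 ≤ n) (hκ : 0 < κ) (hh : GoodH h h' h'') (hε : 0 < ε)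
    (S : PolarSol n κ h' (-log ε) w p) :
    Extremal n κ h' ε (toRadial ε w) (toRadialDeriv ε w p)
      (fun R => stressC n κ h' (p (log R - log ε)) (w (log R - log ε))) where
  pos R hR := mul_pos (hε.trans_le hR.1) (exp_pos _)
  deriv_pos R hR := mul_pos (S.pos _ (log_sub_log_mem_Icc hε hR)) (exp_pos _)
  hasDeriv R hR := S.hasDeriv_toRadial hε hR
  continuousOn_deriv := (continuousOn_comp_log hε (S.continuousOn_p hκ hh)).mul
    (continuousOn_comp_log hε S.continuousOn_w).rexp
  hasDeriv_q R hR := by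
    rw [mul_toRadialDeriv_div w p (hε.trans_le hR.1)]
    refine (hasDerivWithinAt_comp_log hε hR
      (S.hasDeriv_q _ (log_sub_log_mem_Icc hε hR))).congr_deriv ?_
    ring
  q_eq R hR := by
    rw [mul_toRadialDeriv_div w p (hε.trans_le hR.1),
      toRadialDeriv_mul_pow hn w p (hε.trans_le hR.1), stressC]

lemma toRadial_inner_pow (hε : 0 < ε) : toRadial ε w ε ^ n = exp (n * (w 0 + log ε)) := by
  rw [exp_nat_mul, exp_add, exp_log hε, toRadial, sub_self, mul_comm]

lemma toRadial_one : toRadial ε w 1 = exp (w (-log ε)) := by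
  simp [toRadial]

lemma innerStress_toRadial (hε : 0 < ε) :
    Extremal.innerStress n κ ε (toRadial ε w)
      (fun R => stressC n κ h' (p (log R - log ε)) (w (log R - log ε))) =
      stress n κ h' w p 0 := by
  simp only [Extremal.innerStress, toRadial, sub_self, stress]
  rw [mul_div_cancel_left₀ _ hε.ne', log_exp]

lemma exists_inner_eq (hn : 2 ≤ n) (hκ : 0 < κ) (hh : GoodH h h' h'') (hε : 0 < ε) (hε1 : ε ≤ 1)
    {b : ℝ} (hb : 0 < b) (θ : ℝ) : ∃ w p, PolarSol n κ h' (-log ε) w p ∧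
      stress n κ h' w p 0 = θ ∧ w 0 = log b / n - log ε ∧ toRadial ε w ε ^ n = b := by
  obtain ⟨w, p, S, h0, hq⟩ := exists_polarSol hn hκ hh (L := -log ε)
    (by linarith [log_nonpos hε.le hε1])
    (θ - κ * ((n : ℝ) - 1) * (1 / n + (log b / n - log ε))) (log b / n - log ε)
  refine ⟨w, p, S, ?_, h0, ?_⟩
  · rw [stress, hq, h0]; ring
  · have hn0 : (n : ℝ) ≠ 0 := by positivity
    rw [toRadial_inner_pow hε, h0, sub_add_cancel, mul_div_cancel₀ _ hn0, exp_log hb]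

lemma toRadial_inner_pow_lt (hn : 2 ≤ n) (hε : 0 < ε) {w₁ w₂ : ℝ → ℝ} :
    toRadial ε w₁ ε ^ n < toRadial ε w₂ ε ^ n ↔ w₁ 0 < w₂ 0 := by
  have hn0 : (0 : ℝ) < n := by positivity
  rw [toRadial_inner_pow hε, toRadial_inner_pow hε, exp_lt_exp, mul_lt_mul_iff_right₀ hn0,
    add_lt_add_iff_right]

end PolarSol

section Chain

open PolarSol

/-- A solution in logarithmic coordinates whose deformation is free of stress at the inner boundary
and has the boundary value `lam`. -/
structure StressFree (n : ℕ) (κ : ℝ) (h' : ℝ → ℝ) (ε lam : ℝ) (w p : ℝ → ℝ) : Prop where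
  sol : PolarSol n κ h' (-log ε) w p
  stress_eq : stress n κ h' w p 0 = 0
  toRadial_one : toRadial ε w 1 = lam

lemma LowerBound.step_stressFree (hn : 2 ≤ n) (hκ : 0 < κ) (hh : GoodH h h' h'') (hε : 0 < ε)
    (hε1 : ε < 1) (hone : stressC n κ h' 1 0 + κ * ((n : ℝ) - 1) * (1 / n) = 0)
    (S : StressFree n κ h' ε lam ws ps) {x y M : ℝ} (hx : 0 < x)
    (hxy : 0 ≤ (x - y) * (toRadial ε ws ε ^ n - x)) (hM : LowerBound n κ ε lam h x M) :
    LowerBound n κ ε lam h y (M - κ * ((n : ℝ) - 1) / n / n * ((x - y) ^ 2 / x)) := by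
  have hL : 0 < -log ε := by linarith [log_neg hε hε1]
  have hlam := S.toRadial_one
  suffices ∃ w p, StressFree n κ h' ε (toRadial ε w 1) w p ∧ toRadial ε w ε ^ n = x ∧
      0 ≤ (x - y) * (lam - toRadial ε w 1) by
    obtain ⟨w, p, S', rfl, hs⟩ := this
    refine (LowerBound.step (b := y) hn hκ hh hε hε1.le (S'.sol.extremal hn hκ hh hε) hs hM).mono ?_
    rw [innerStress_toRadial hε, S'.stress_eq]
    apply le_of_eq
    ring
  obtain ⟨w, p, S', hT, -, hb⟩ := exists_inner_eq (h' := h') hn hκ hh hε hε1.le hx 0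
  rcases lt_trichotomy x (toRadial ε ws ε ^ n) with hlt | heq | hlt
  · refine ⟨w, p, ⟨S', hT, rfl⟩, hb, ?_⟩
    have := exp_lt_exp.2 (endpoint_lt hn hκ hh hL hone S' S.sol hT S.stress_eq
        ((toRadial_inner_pow_lt hn hε).1 (hb.trans_lt hlt)))
    rw [← PolarSol.toRadial_one, ← PolarSol.toRadial_one, hlam] at this
    nlinarith
  · refine ⟨ws, ps, ⟨S.sol, S.stress_eq, rfl⟩, heq.symm, ?_⟩
    rw [hlam]; simp
  · refine ⟨w, p, ⟨S', hT, rfl⟩, hb, ?_⟩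
    have := exp_lt_exp.2 (endpoint_lt hn hκ hh hL hone S.sol S' S.stress_eq hT
        ((toRadial_inner_pow_lt hn hε).1 (hlt.trans_eq hb.symm)))
    rw [← PolarSol.toRadial_one, ← PolarSol.toRadial_one, hlam] at this
    nlinarith

/-- Lower bounds propagate away from the stress-free extremal without loss. -/
lemma LowerBound.chain (hn : 2 ≤ n) (hκ : 0 < κ) (hh : GoodH h h' h'') (hε : 0 < ε)
    (hε1 : ε < 1) (hone : stressC n κ h' 1 0 + κ * ((n : ℝ) - 1) * (1 / n) = 0)
    (S : StressFree n κ h' ε lam ws ps) {b c M : ℝ} (hb : 0 < b) (hc : 0 < c)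
    (hbc : 0 ≤ (c - b) * (toRadial ε ws ε ^ n - c)) (hM : LowerBound n κ ε lam h c M) :
    LowerBound n κ ε lam h b M := by
  set C := κ * ((n : ℝ) - 1) / n / n with hC
  have hn' : (2 : ℝ) ≤ n := by exact_mod_cast hn
  have hC0 : 0 < C := by
    have : (0 : ℝ) < n - 1 := by linarith
    positivity
  set m := min b c with hm
  have hm0 : 0 < m := lt_min hb hc
  have key : ∀ N : ℕ, 0 < N → ∀ i : ℕ, i ≤ N → LowerBound n κ ε lam h (c + i / N * (b - c))
      (M - i * (C * (((c - b) / N) ^ 2 / m))) := by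
    intro N hN i
    have hN' : (0 : ℝ) < N := by exact_mod_cast hN
    induction i with
    | zero => intro _; simpa using hM
    | succ i ih =>
      intro hi
      have hi' : (i : ℝ) / N ≤ 1 := by
        rw [div_le_one hN']; exact_mod_cast (Nat.le_of_succ_le hi)
      have hi0 : (0 : ℝ) ≤ i / N := by positivity
      have hx : m ≤ c + i / N * (b - c) := by
        have h1 : m ≤ b := min_le_left _ _
        have h2 : m ≤ c := min_le_right _ _
        linarith [mul_nonneg hi0 (sub_nonneg.2 h1),
          mul_nonneg (sub_nonneg.2 hi') (sub_nonneg.2 h2)]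
      have e1 : c + i / N * (b - c) - (c + (i + 1 : ℕ) / N * (b - c)) = (c - b) / N := by
        push_cast; field
      refine (LowerBound.step_stressFree hn hκ hh hε hε1 hone S (hm0.trans_le hx) ?_
        (ih (Nat.le_of_succ_le hi))).mono ?_
      · rw [e1, div_mul_eq_mul_div]
        refine div_nonneg ?_ hN'.le
        linarith [mul_nonneg hi0 (sq_nonneg (c - b))]
      · rw [e1, ← hC]
        have : C * (((c - b) / N) ^ 2 / (c + i / N * (b - c))) ≤ C * (((c - b) / N) ^ 2 / m) := by
          gcongr
        push_cast
        linarith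
  intro v v' A hFi hv
  have h1 : ∀ N : ℕ, 0 < N → M - C * ((c - b) ^ 2 / m) / N ≤
      ∫ R in Ioc ε 1, energyDensity n κ h v v' R := by
    intro N hN
    have hN' : (0 : ℝ) < N := by exact_mod_cast hN
    have h2 := key N hN N le_rfl
    rw [div_self hN'.ne', one_mul, add_sub_cancel] at h2
    refine le_trans (le_of_eq ?_) (h2 v v' A hFi hv)
    field
  refine le_of_tendsto (x := atTop) (f := fun N : ℕ => M - C * ((c - b) ^ 2 / m) / N) ?_
    (eventually_atTop.2 ⟨1, fun N hN => h1 N hN⟩)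
  simpa using (tendsto_const_div_atTop_nhds_zero_nat (C * ((c - b) ^ 2 / m))).const_sub M

/-- Away from the stress-free extremal the lower bound is strict. -/
lemma LowerBound.exists_gap (hn : 2 ≤ n) (hκ : 0 < κ) (hh : GoodH h h' h'') (hε : 0 < ε)
    (hε1 : ε < 1) (hone : stressC n κ h' 1 0 + κ * ((n : ℝ) - 1) * (1 / n) = 0)
    (S : StressFree n κ h' ε lam ws ps) {b M : ℝ} (hb : 0 < b)
    (hne : b ≠ toRadial ε ws ε ^ n) (hM : LowerBound n κ ε lam h (toRadial ε ws ε ^ n) M) :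
    ∃ γ > 0, LowerBound n κ ε lam h b (M + γ) := by
  have hL : 0 < -log ε := by linarith [log_neg hε hε1]
  have hlam := S.toRadial_one
  have hn' : (2 : ℝ) ≤ n := by exact_mod_cast hn
  have ha : 0 < toRadial ε ws ε ^ n :=
    pow_pos ((S.sol.extremal hn hκ hh hε).pos ε ⟨le_rfl, hε1.le⟩) n
  have hchain : ∀ b' > 0, LowerBound n κ ε lam h b' M := fun b' hb' =>
    LowerBound.chain hn hκ hh hε hε1 hone S hb' ha (by simp) hM
  set a := toRadial ε ws ε ^ n with hadef
  set c := κ * ((n : ℝ) - 1) / n with hc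
  have hc0 : 0 < c := by
    have : (0 : ℝ) < n - 1 := by linarith
    positivity
  obtain ⟨w, p, S', hT, hw0, hwb⟩ := exists_inner_eq (h' := h') hn hκ hh hε hε1.le hb 0
  obtain ⟨σ, hσ, hside⟩ : ∃ σ : ℝ, σ ^ 2 = 1 ∧ 0 < σ * (ws (-log ε) - w (-log ε)) := by
    rcases lt_or_gt_of_ne hne with hlt | hlt
    · refine ⟨1, by norm_num, ?_⟩
      have := endpoint_lt hn hκ hh hL hone S' S.sol hT S.stress_eq
        ((toRadial_inner_pow_lt hn hε).1 (hwb.trans_lt hlt))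
      linarith
    · refine ⟨-1, by norm_num, ?_⟩
      have := endpoint_lt hn hκ hh hL hone S.sol S' S.stress_eq hT
        ((toRadial_inner_pow_lt hn hε).1 (hlt.trans_eq hwb.symm))
      linarith
  set B : ℝ → ℝ := fun t => b + σ * (t * (b / (4 * c))) with hB
  set W : ℝ → ℝ := fun t => log (B t) / n - log ε with hW
  set Q : ℝ → ℝ := fun t => σ * t - κ * ((n : ℝ) - 1) * (1 / n + W t) with hQ
  have hBc : Continuous B := by fun_prop
  have hB0 : B 0 = b := by simp [hB]
  have hWc : ContinuousAt W 0 := by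
    refine ((hBc.continuousAt.log ?_).div_const _).sub continuousAt_const
    rw [hB0]; exact hb.ne'
  have hQc : ContinuousAt Q 0 := by fun_prop
  have hW0 : W 0 = w 0 := by rw [hw0, hW]; simp only [hB0]
  have hQ0 : Q 0 = stressC n κ h' (p 0) (w 0) := by
    rw [stress] at hT
    simp only [hQ, hW0]
    linarith
  obtain ⟨K, hK, hlip⟩ := exists_endpoint_lipschitz (h' := h') hn hκ hh hL.le (|w 0| + 1)
    (|stressC n κ h' (p 0) (w 0)| + 1)
  have hmax : ContinuousAt (fun t => max |Q t - Q 0| |W t - W 0| * K) 0 := by fun_prop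
  have hmax0 : (fun t => max |Q t - Q 0| |W t - W 0| * K) 0 = 0 := by simp
  have ev : ∀ᶠ t in nhdsWithin (0 : ℝ) (Ioi 0), 0 < t ∧ b / 2 < B t ∧ |W t| < |w 0| + 1 ∧
      |Q t| < |stressC n κ h' (p 0) (w 0)| + 1 ∧
      max |Q t - Q 0| |W t - W 0| * K < |ws (-log ε) - w (-log ε)| := by
    refine Filter.Eventually.and self_mem_nhdsWithin (Filter.Eventually.filter_mono
      nhdsWithin_le_nhds ?_)
    refine Filter.Eventually.and (hBc.continuousAt.eventually_const_lt (by rw [hB0]; linarith))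
      (Filter.Eventually.and (hWc.abs.eventually_lt_const (by simp only [hW0]; linarith))
      (Filter.Eventually.and (hQc.abs.eventually_lt_const (by simp only [hQ0]; linarith))
      (hmax.eventually_lt_const ?_)))
    rw [hmax0]
    have : ws (-log ε) - w (-log ε) ≠ 0 := fun h0 => by rw [h0] at hside; simp at hside
    positivity
  obtain ⟨t, ht, hbt, hWt, hQt, hclose⟩ := ev.exists
  have hBt : 0 < B t := by linarith
  obtain ⟨w', p', S₂, hT₂, hw₂, hb₂⟩ := exists_inner_eq (h' := h') hn hκ hh hε hε1.le hBt (σ * t)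
  have hw₂' : w' 0 = W t := hw₂
  have hq₂ : stressC n κ h' (p' 0) (w' 0) = Q t := by
    rw [stress, hw₂'] at hT₂
    rw [hw₂']
    simp only [hQ]
    linarith
  have hend := hlip w' p' w p S₂ S' (by rw [hw₂']; exact hWt.le) (by linarith)
    (by rw [hq₂]; exact hQt.le) (by linarith)
  rw [hq₂, hw₂', ← hQ0, ← hW0] at hend
  have hend' := hend.trans_lt hclose
  have hσt : 0 ≤ σ * (ws (-log ε) - w' (-log ε)) := by
    have hσa : |σ| = 1 := by
      rw [← abs_one, ← sq_eq_sq_iff_abs_eq_abs, hσ, one_pow]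
    have h1 : |ws (-log ε) - w (-log ε)| = σ * (ws (-log ε) - w (-log ε)) := by
      rw [← abs_of_pos hside, abs_mul, hσa, one_mul]
    have h2 : σ * (w' (-log ε) - w (-log ε)) ≤ |w' (-log ε) - w (-log ε)| := by
      refine (le_abs_self _).trans ?_
      rw [abs_mul, hσa, one_mul]
    linarith
  have hdiff : B t - b = σ * (t * (b / (4 * c))) := by simp [hB]
  have hs : 0 ≤ (toRadial ε w' ε ^ n - b) * (lam - toRadial ε w' 1) := by
    rw [hb₂, hdiff, ← hlam, PolarSol.toRadial_one, PolarSol.toRadial_one]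
    have h1 : 0 ≤ σ * (exp (ws (-log ε)) - exp (w' (-log ε))) := by
      rcases (sq_eq_sq_iff_eq_or_eq_neg.1 (hσ.trans (one_pow 2).symm)) with rfl | rfl
      · have := exp_le_exp.2 (show w' (-log ε) ≤ ws (-log ε) by linarith)
        linarith
      · have := exp_le_exp.2 (show ws (-log ε) ≤ w' (-log ε) by linarith)
        linarith
    have h2 : 0 < t * (b / (4 * c)) := by positivity
    linarith [mul_nonneg h2.le h1]
  have hstep := LowerBound.step (b := b) hn hκ hh hε hε1.le (S₂.extremal hn hκ hh hε) hs
    (by rw [hb₂]; exact hchain _ hBt)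
  rw [innerStress_toRadial hε, hT₂, hb₂, hdiff, ← hc] at hstep
  refine ⟨_, ?_, hstep⟩
  have h1 : σ * t * (σ * (t * (b / (4 * c)))) = t * (t * (b / (4 * c))) := by
    linear_combination (t * (t * (b / (4 * c)))) * hσ
  have h2 : (σ * (t * (b / (4 * c)))) ^ 2 = (t * (b / (4 * c))) ^ 2 := by
    rw [mul_pow, hσ, one_mul]
  rw [h1, h2]
  have h3 : c * ((t * (b / (4 * c))) ^ 2 / B t) ≤ c * ((t * (b / (4 * c))) ^ 2 / (b / 2)) := by
    gcongr
  have h4 : c * ((t * (b / (4 * c))) ^ 2 / (b / 2)) = t * (t * (b / (4 * c))) / 2 := by field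
  have h5 : 0 < t * (t * (b / (4 * c))) := by positivity
  refine mul_pos (by positivity) ?_
  linarith

/-- The gap persists for deformations that close the cavity. -/
lemma LowerBound.exists_gap_zero (hn : 2 ≤ n) (hκ : 0 < κ) (hh : GoodH h h' h'') (hε : 0 < ε)
    (hε1 : ε < 1) (hone : stressC n κ h' 1 0 + κ * ((n : ℝ) - 1) * (1 / n) = 0)
    (S : StressFree n κ h' ε lam ws ps) {M : ℝ}
    (hM : LowerBound n κ ε lam h (toRadial ε ws ε ^ n) M) :
    ∃ γ > 0, LowerBound n κ ε lam h 0 (M + γ) := by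
  have ha : 0 < toRadial ε ws ε ^ n :=
    pow_pos ((S.sol.extremal hn hκ hh hε).pos ε ⟨le_rfl, hε1.le⟩) n
  have hn' : (2 : ℝ) ≤ n := by exact_mod_cast hn
  obtain ⟨γ, hγ, hgap⟩ := LowerBound.exists_gap (b := toRadial ε ws ε ^ n / 2) hn hκ hh hε hε1 hone
    S (by positivity) (by linarith) hM
  set a := toRadial ε ws ε ^ n with hadef
  set C := κ * ((n : ℝ) - 1) / n / n with hC
  have hC0 : 0 < C := by
    have : (0 : ℝ) < n - 1 := by linarith
    positivity
  set x := min (a / 2) (γ / (2 * C)) with hx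
  have hx0 : 0 < x := lt_min (by positivity) (by positivity)
  have hxa : x ≤ a / 2 := min_le_left _ _
  have hxγ : C * x ≤ γ / 2 := by
    have : x ≤ γ / (2 * C) := min_le_right _ _
    calc C * x ≤ C * (γ / (2 * C)) := by gcongr
      _ = γ / 2 := by field_simp
  have h1 : LowerBound n κ ε lam h x (M + γ) :=
    LowerBound.chain hn hκ hh hε hε1 hone S hx0 (by positivity) (by
      rw [← hadef]; exact mul_nonneg (by linarith) (by linarith)) hgap
  refine ⟨γ / 2, by positivity, (LowerBound.step_stressFree hn hκ hh hε hε1 hone S hx0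
    (by rw [← hadef]; exact mul_nonneg (by linarith) (by linarith)) h1).mono ?_⟩
  have h2 : (x - 0) ^ 2 / x = x := by rw [sub_zero, sq, mul_self_div_self]
  rw [h2, ← hC]
  linarith

end Chain

end PolarExtremal

section Minimizer

open PolarSol

variable {n : ℕ} {κ ε lam : ℝ} {h h' h'' U ρ q v v' w p : ℝ → ℝ}

lemma AdmE.aestronglyMeasurable_energyDensity (hh : GoodH h h' h'') (hε : 0 < ε) (hε1 : ε ≤ 1)
    (A : AdmE ε lam v v') :
    AEStronglyMeasurable (energyDensity n κ h v v') (volume.restrict (Ioc ε 1)) := by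
  have hv : AEMeasurable v (volume.restrict (Ioc ε 1)) :=
    ((A.continuousOn hε1).mono Ioc_subset_Icc_self).aemeasurable measurableSet_Ioc
  have hv' : AEMeasurable v' (volume.restrict (Ioc ε 1)) := A.intg.aemeasurable
  have hm : Measurable ((Ioi (0 : ℝ)).indicator h) := by
    have hc : ContinuousOn h (Ioi 0) := fun d hd => (hh.deriv1 d hd).continuousAt.continuousWithinAt
    classical
    rw [← piecewise_eq_indicator]
    exact hc.measurable_piecewise continuousOn_const measurableSet_Ioi
  have hquot : AEMeasurable (fun R => v R / R) (volume.restrict (Ioc ε 1)) :=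
    hv.div aemeasurable_id
  have hD : AEMeasurable (fun R => v' R * (v R / R) ^ (n - 1)) (volume.restrict (Ioc ε 1)) :=
    hv'.mul (hquot.pow_const _)
  have hlog : AEMeasurable (fun R => log (v R / R)) (volume.restrict (Ioc ε 1)) :=
    measurable_log.comp_aemeasurable hquot
  have hind := hm.comp_aemeasurable hD
  refine (AEMeasurable.congr (f := fun R => R ^ (n - 1) * ((κ / n) * v' R ^ n +
    (Ioi (0 : ℝ)).indicator h (v' R * (v R / R) ^ (n - 1)) +
    κ * (v' R * (v R / R) ^ (n - 1)) * (((n : ℝ) - 1) / n + ((n : ℝ) - 1) * log (v R / R))))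
    ?_ ?_).aestronglyMeasurable
  · exact (aemeasurable_id.pow_const _).mul ((((hv'.pow_const _).const_mul _).add hind).add
      ((hD.const_mul _).mul ((hlog.const_mul _).const_add _)))
  · filter_upwards [A.ae_pos] with R ⟨hR, hvR, hvR'⟩
    have : 0 < v' R * (v R / R) ^ (n - 1) :=
      mul_pos hvR' (pow_pos (div_pos hvR (hε.trans_le hR.1)) _)
    rw [indicator_of_mem (mem_Ioi.2 this), energyDensity, PhiHat]

lemma IHatEps_of_integrableOn (hFi : IntegrableOn (energyDensity n κ h v v') (Ioc ε 1)) :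
    IHatEps n κ ε lam h v v' = ((∫ R in Ioc ε 1, energyDensity n κ h v v' R) -
      κ * ((n : ℝ) - 1) / n * lam ^ n * log lam : ℝ) := by
  have h1 := hFi.lintegral_lt_top
  have h2 : ∫⁻ R in Ioc ε 1, ENNReal.ofReal (-energyDensity n κ h v v' R) < ⊤ :=
    hFi.neg.lintegral_lt_top
  rw [integral_eq_lintegral_pos_part_sub_lintegral_neg_part hFi, EReal.coe_sub, EReal.coe_sub,
    EReal.coe_ennreal_toReal h1.ne, EReal.coe_ennreal_toReal h2.ne]
  rfl

lemma Extremal.IHatEps_of_not_integrableOn (hn : 2 ≤ n) (hκ : 0 < κ) (hh : GoodH h h' h'')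
    (hε : 0 < ε) (hε1 : ε ≤ 1) (E : Extremal n κ h' ε U ρ q) (A : AdmE ε lam v v')
    (hFi : ¬IntegrableOn (energyDensity n κ h v v') (Ioc ε 1)) :
    IHatEps n κ ε lam h v v' = ⊤ := by
  have hX : (1 : ℝ) ∈ Icc ε 1 := ⟨hε1, le_rfl⟩
  have hg := (E.integrableOn_calibDeriv hn hε A hX).1.add (E.integrableOn_rest hε hh hX)
  have hneg : ∫⁻ R in Ioc ε 1, ENNReal.ofReal (-energyDensity n κ h v v' R) ≠ ⊤ := by
    refine ((lintegral_mono_ae ?_).trans_lt hg.neg.lintegral_lt_top).ne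
    filter_upwards [A.ae_pos] with R hR
    exact ENNReal.ofReal_le_ofReal
      (neg_le_neg (E.le_energyDensity hn hκ hh hε hR.1 hR.2.1 hR.2.2).1)
  have hpos : ∫⁻ R in Ioc ε 1, ENNReal.ofReal (energyDensity n κ h v v' R) = ⊤ := by
    by_contra hfin
    refine hFi ⟨A.aestronglyMeasurable_energyDensity hh hε hε1, ?_⟩
    rw [hasFiniteIntegral_iff_norm]
    calc ∫⁻ R in Ioc ε 1, ENNReal.ofReal ‖energyDensity n κ h v v' R‖
        ≤ ∫⁻ R in Ioc ε 1, (ENNReal.ofReal (energyDensity n κ h v v' R) +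
            ENNReal.ofReal (-energyDensity n κ h v v' R)) := by
          refine lintegral_mono fun R => ?_
          rcases abs_cases (energyDensity n κ h v v' R) with ⟨h1, -⟩ | ⟨h1, -⟩ <;>
          simp [h1]
      _ = _ := lintegral_add_left' (A.aestronglyMeasurable_energyDensity
            hh hε hε1).aemeasurable.ennreal_ofReal _
      _ < ⊤ := ENNReal.add_lt_top.2 ⟨lt_top_iff_ne_top.2 hfin, lt_top_iff_ne_top.2 hneg⟩
  change ((∫⁻ R in Ioc ε 1, ENNReal.ofReal (energyDensity n κ h v v' R) : ℝ≥0∞) : EReal) -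
    ((∫⁻ R in Ioc ε 1, ENNReal.ofReal (-energyDensity n κ h v v' R) : ℝ≥0∞) : EReal) - _ = ⊤
  rw [hpos, ← EReal.coe_ennreal_toReal hneg, EReal.coe_ennreal_top, EReal.top_sub_coe,
    EReal.top_sub_coe]

namespace StressFree

lemma exists_of_pos (hn : 2 ≤ n) (hκ : 0 < κ) (hh : GoodH h h' h'') (hε : 0 < ε) (hε1 : ε < 1)
    (hone : stressC n κ h' 1 0 + κ * ((n : ℝ) - 1) * (1 / n) = 0) (hlam : 0 < lam) :
    ∃ w p, StressFree n κ h' ε lam w p := by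
  obtain ⟨w, p, S, hT, hW⟩ := exists_shooting hn hκ hh (L := -log ε)
    (by linarith [log_neg hε hε1]) hone (log lam)
  exact ⟨w, p, S, hT, by rw [PolarSol.toRadial_one, hW, exp_log hlam]⟩

lemma admE (hn : 2 ≤ n) (hκ : 0 < κ) (hh : GoodH h h' h'') (hε : 0 < ε) (hε1 : ε < 1)
    (S : StressFree n κ h' ε lam w p) :
    AdmE ε lam (toRadial ε w) (toRadialDeriv ε w p) :=
  S.toRadial_one ▸ (S.sol.extremal hn hκ hh hε).admE hε1.le

/-- The stress-free extremal minimizes the energy integral, strictly among the deformations with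
a different inner radius. -/
lemma integral_le (hn : 2 ≤ n) (hκ : 0 < κ) (hh : GoodH h h' h'') (hε : 0 < ε) (hε1 : ε < 1)
    (hone : stressC n κ h' 1 0 + κ * ((n : ℝ) - 1) * (1 / n) = 0)
    (S : StressFree n κ h' ε lam w p) (A : AdmE ε lam v v')
    (hFi : IntegrableOn (energyDensity n κ h v v') (Ioc ε 1)) :
    ∫ R in Ioc ε 1, energyDensity n κ h (toRadial ε w) (toRadialDeriv ε w p) R ≤
      ∫ R in Ioc ε 1, energyDensity n κ h v v' R ∧
    (∫ R in Ioc ε 1, energyDensity n κ h v v' R ≤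
      ∫ R in Ioc ε 1, energyDensity n κ h (toRadial ε w) (toRadialDeriv ε w p) R →
        v ε = toRadial ε w ε) := by
  have E := S.sol.extremal hn hκ hh hε
  have hM := E.lowerBound hn hκ hh hε hε1.le S.toRadial_one
  by_cases heq : v ε = toRadial ε w ε
  · exact ⟨hM v v' A hFi (by rw [heq]), fun _ => heq⟩
  have hne : v ε ^ n ≠ toRadial ε w ε ^ n := fun hp =>
    heq ((pow_left_inj₀ A.c0 (E.pos ε ⟨le_rfl, hε1.le⟩).le (by omega)).1 hp)
  obtain ⟨γ, hγ, hgap⟩ : ∃ γ > 0, LowerBound n κ ε lam h (v ε ^ n)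
      ((∫ R in Ioc ε 1, energyDensity n κ h (toRadial ε w) (toRadialDeriv ε w p) R) + γ) := by
    rcases (pow_nonneg A.c0 n).eq_or_lt' with h0 | h0
    · rw [h0]
      exact LowerBound.exists_gap_zero hn hκ hh hε hε1 hone S hM
    · exact LowerBound.exists_gap hn hκ hh hε hε1 hone S h0 hne hM
  have := hgap v v' A hFi rfl
  exact ⟨by linarith, fun hle => by linarith⟩

lemma IHatEps_le (hn : 2 ≤ n) (hκ : 0 < κ) (hh : GoodH h h' h'') (hε : 0 < ε) (hε1 : ε < 1)
    (hone : stressC n κ h' 1 0 + κ * ((n : ℝ) - 1) * (1 / n) = 0)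
    (S : StressFree n κ h' ε lam w p) (A : AdmE ε lam v v') :
    IHatEps n κ ε lam h (toRadial ε w) (toRadialDeriv ε w p) ≤ IHatEps n κ ε lam h v v' := by
  have E := S.sol.extremal hn hκ hh hε
  by_cases hFi : IntegrableOn (energyDensity n κ h v v') (Ioc ε 1)
  · rw [IHatEps_of_integrableOn hFi,
      IHatEps_of_integrableOn (E.integrableOn_self hn hh hε ⟨hε1.le, le_rfl⟩).1,
      EReal.coe_le_coe_iff]
    exact sub_le_sub_right (S.integral_le hn hκ hh hε hε1 hone A hFi).1 _
  · rw [E.IHatEps_of_not_integrableOn hn hκ hh hε hε1.le A hFi]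
    exact le_top

lemma eqOn_of_IHatEps_le (hn : 2 ≤ n) (hκ : 0 < κ) (hh : GoodH h h' h'') (hε : 0 < ε)
    (hε1 : ε < 1) (hone : stressC n κ h' 1 0 + κ * ((n : ℝ) - 1) * (1 / n) = 0)
    (S : StressFree n κ h' ε lam w p) (A : AdmE ε lam v v')
    (hle : IHatEps n κ ε lam h v v' ≤
      IHatEps n κ ε lam h (toRadial ε w) (toRadialDeriv ε w p)) :
    EqOn v (toRadial ε w) (Icc ε 1) := by
  have E := S.sol.extremal hn hκ hh hε
  rw [IHatEps_of_integrableOn (E.integrableOn_self hn hh hε ⟨hε1.le, le_rfl⟩).1] at hle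
  by_cases hFi : IntegrableOn (energyDensity n κ h v v') (Ioc ε 1)
  · rw [IHatEps_of_integrableOn hFi, EReal.coe_le_coe_iff, sub_le_sub_iff_right] at hle
    exact E.eqOn_of_integral_le hn hκ hh hε hε1.le S.toRadial_one A hFi
      ((S.integral_le hn hκ hh hε hε1 hone A hFi).2 hle) hle
  · rw [E.IHatEps_of_not_integrableOn hn hκ hh hε hε1.le A hFi] at hle
    exact absurd hle (not_le.2 (EReal.coe_lt_top _))

end StressFree

namespace PolarSol

/-- The second derivative of `toRadial`. -/
def toRadialDeriv2 (n : ℕ) (κ : ℝ) (h'' : ℝ → ℝ) (ε : ℝ) (w p : ℝ → ℝ) (R : ℝ) : ℝ :=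
  (p (log R - log ε) - decayRate n κ h'' (p (log R - log ε)) (w (log R - log ε))) *
    (p (log R - log ε) - 1) * exp (w (log R - log ε)) * R⁻¹

lemma hasDeriv_toRadialDeriv (hκ : 0 < κ) (hh : GoodH h h' h'') (hε : 0 < ε)
    (S : PolarSol n κ h' (-log ε) w p) {R : ℝ} (hR : R ∈ Icc ε 1) :
    HasDerivWithinAt (toRadialDeriv ε w p) (toRadialDeriv2 n κ h'' ε w p R) (Icc ε 1) R := by
  have hs := log_sub_log_mem_Icc hε hR
  refine ((hasDerivWithinAt_comp_log hε hR (S.hasDeriv_p hκ hh hs)).mul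
    (hasDerivWithinAt_comp_log hε hR (S.hasDeriv_w _ hs)).exp).congr_deriv ?_
  simp only [toRadialDeriv2]
  ring

lemma continuousOn_toRadialDeriv2 (hκ : 0 < κ) (hh : GoodH h h' h'') (hε : 0 < ε)
    (S : PolarSol n κ h' (-log ε) w p) :
    ContinuousOn (toRadialDeriv2 n κ h'' ε w p) (Icc ε 1) := by
  have hp := continuousOn_comp_log hε (S.continuousOn_p hκ hh)
  exact (((hp.sub (continuousOn_comp_log hε (S.continuousOn_decayRate hκ hh))).mul
    (hp.sub continuousOn_const)).mul (continuousOn_comp_log hε S.continuousOn_w).rexp).mul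
    (continuousOn_id.inv₀ fun x hx => (hε.trans_le hx.1).ne')

lemma THat_toRadial (hn : 2 ≤ n) (w p : ℝ → ℝ) {R : ℝ} (hR : 0 < R) :
    THat n κ h' (toRadialDeriv ε w p R) (toRadial ε w R / R) =
      stress n κ h' w p (log R - log ε) := by
  rw [THat, toRadialDeriv_mul_pow hn w p hR, stress, stressC, toRadial,
    mul_div_cancel_left₀ _ hR.ne', log_exp, toRadialDeriv, mul_div_cancel_right₀ _ (exp_ne_zero _)]
  ring

lemma pow_mul_PhiHat1 {q u R : ℝ} (hR : 0 < R) (hu : 0 < u) :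
    R ^ (n - 1) * PhiHat1 n κ h' q (u / R) = u ^ (n - 1) * THat n κ h' q (u / R) := by
  have e1 : R ^ (n - 1) * (u / R) ^ (n - 1) = u ^ (n - 1) := by
    rw [← mul_pow, mul_div_cancel₀ _ hR.ne']
  have e2 : u ^ (n - 1) * (q / (u / R)) ^ (n - 1) = R ^ (n - 1) * q ^ (n - 1) := by
    rw [← mul_pow, ← mul_pow]
    congr 1
    field
  rw [PhiHat1, THat]
  linear_combination (h' (q * (u / R) ^ (n - 1)) +
    κ * (((n : ℝ) - 1) / n + ((n : ℝ) - 1) * log (u / R))) * e1 - κ * e2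

lemma hasDerivAt_PhiHat1 (hn : 2 ≤ n) (hε : 0 < ε)
    (S : PolarSol n κ h' (-log ε) w p) {R : ℝ} (hR : R ∈ Ioo ε 1) :
    HasDerivAt (fun s => s ^ (n - 1) * PhiHat1 n κ h' (toRadialDeriv ε w p s) (toRadial ε w s / s))
      (((n : ℝ) - 1) * R ^ (n - 2) *
        PhiHat2 n κ h' (toRadialDeriv ε w p R) (toRadial ε w R / R)) R := by
  have hR' := Ioo_subset_Icc_self hR
  have hR0 : 0 < R := hε.trans hR.1
  have hs := log_sub_log_mem_Icc hε hR'
  have hnhds := Icc_mem_nhds hR.1 hR.2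
  have h1 := (((S.hasDeriv_toRadial hε hR').pow (n - 1)).mul
    (hasDerivWithinAt_comp_log hε hR' (S.hasDeriv_stress hs))).hasDerivAt hnhds
  refine (h1.congr_of_eventuallyEq ?_).congr_deriv ?_
  · filter_upwards [hnhds] with s hs
    have hs0 := hε.trans_le hs.1
    rw [pow_mul_PhiHat1 hs0 (show 0 < toRadial ε w s from mul_pos hs0 (exp_pos _)),
      THat_toRadial hn w p hs0]
    rfl
  · rw [PhiHat2, toRadialDeriv_mul_pow hn w p hR0]
    simp only [Pi.pow_apply, stress, stressC, toRadial, toRadialDeriv]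
    rw [mul_div_cancel_left₀ _ hR0.ne', log_exp]
    obtain ⟨m, rfl⟩ := Nat.exists_eq_add_of_le' hn
    have e1 : m + 2 - 1 = m + 1 := rfl
    have e2 : m + 2 - 2 = m := rfl
    have e3 : m + 1 - 1 = m := rfl
    rw [e1, e2, e3]
    push_cast
    field_simp
    ring

end PolarSol

end Minimizer

/-- for each `ε ∈ (0,1)` the punctured-ball functional `Î_ε` has a unique
global minimizer over `𝒜_λ^ε`; moreover there is `δ(ε) > 0` such that for
`λ > 1 − δ(ε)` any global minimizer is `C²([ε,1])`, solves the modified equilibrium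
equation on `(ε,1)`, has positive strain, `r_ε(ε) > 0`, and `T̂(r_ε(ε)) = 0`. -/
theorem stmt18 (n : ℕ) (hn : 2 ≤ n) (κ : ℝ) (hκ : 0 < κ)
    (h h' h'' : ℝ → ℝ) (hh : GoodH h h' h'') (hconv : ConvexOn ℝ (Set.Ioi 0) h)
    (K γ₀ : ℝ) (hK : 0 < K) (hγ₀ : 0 < γ₀)
    (hctrl : ∀ d : ℝ, 0 < d → ∀ c : ℝ, |c - 1| ≤ γ₀ → |d * h' (c * d)| ≤ K * (h d + 1))
    (huniq : ∀ t : ℝ, 0 < t → (PhiHat1 n κ h' t t = 0 ↔ t = 1))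
    (ε : ℝ) (hε : ε ∈ Set.Ioo (0:ℝ) 1) :
    (∀ lam : ℝ, 0 < lam →
      ∃ re re' : ℝ → ℝ, AdmE ε lam re re' ∧
        (∀ s s' : ℝ → ℝ, AdmE ε lam s s' →
          IHatEps n κ ε lam h re re' ≤ IHatEps n κ ε lam h s s') ∧
        (∀ s s' : ℝ → ℝ, AdmE ε lam s s' →
          (∀ t t' : ℝ → ℝ, AdmE ε lam t t' →
            IHatEps n κ ε lam h s s' ≤ IHatEps n κ ε lam h t t') →
          ∀ R ∈ Set.Icc ε 1, s R = re R)) ∧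
    (∃ dlt : ℝ, 0 < dlt ∧ ∀ lam : ℝ, 1 - dlt < lam →
      ∀ re re' : ℝ → ℝ, AdmE ε lam re re' →
        (∀ s s' : ℝ → ℝ, AdmE ε lam s s' →
          IHatEps n κ ε lam h re re' ≤ IHatEps n κ ε lam h s s') →
        ∃ ρ ρ' : ℝ → ℝ,
          (∀ R ∈ Set.Icc ε 1, HasDerivWithinAt re (ρ R) (Set.Icc ε 1) R) ∧
          (∀ R ∈ Set.Icc ε 1, HasDerivWithinAt ρ (ρ' R) (Set.Icc ε 1) R) ∧
          ContinuousOn ρ' (Set.Icc ε 1) ∧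
          (∀ R ∈ Set.Ioo ε 1,
            HasDerivAt (fun s => s ^ (n - 1) * PhiHat1 n κ h' (ρ s) (re s / s))
              (((n:ℝ) - 1) * R ^ (n - 2) * PhiHat2 n κ h' (ρ R) (re R / R)) R) ∧
          (∀ R ∈ Set.Icc ε 1, 0 < ρ R) ∧
          0 < re ε ∧
          THat n κ h' (ρ ε) (re ε / ε) = 0) := by
  obtain ⟨hε0, hε1⟩ := hε
  have hone : stressC n κ h' 1 0 + κ * ((n : ℝ) - 1) * (1 / n) = 0 := by
    have h1 := (huniq 1 one_pos).2 rfl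
    simp only [PhiHat1, one_pow, mul_one, log_one] at h1
    simp only [stressC, one_pow, mul_zero, exp_zero, mul_one]
    linear_combination h1
  refine ⟨fun lam hlam => ?_, 1, one_pos, fun lam hlam re re' A hmin => ?_⟩
  · obtain ⟨w, p, S⟩ := StressFree.exists_of_pos hn hκ hh hε0 hε1 hone hlam
    have B := S.admE hn hκ hh hε0 hε1
    exact ⟨_, _, B, fun s s' C => S.IHatEps_le hn hκ hh hε0 hε1 hone C,
      fun s s' C hC => S.eqOn_of_IHatEps_le hn hκ hh hε0 hε1 hone C (hC _ _ B)⟩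
  · obtain ⟨w, p, S⟩ := StressFree.exists_of_pos hn hκ hh hε0 hε1 hone
      (show 0 < lam by linarith)
    have hεI : ε ∈ Icc ε 1 := ⟨le_rfl, hε1.le⟩
    have E := S.sol.extremal hn hκ hh hε0
    have heq := S.eqOn_of_IHatEps_le hn hκ hh hε0 hε1 hone A
      (hmin _ _ (S.admE hn hκ hh hε0 hε1))
    refine ⟨PolarSol.toRadialDeriv ε w p, PolarSol.toRadialDeriv2 n κ h'' ε w p,
      fun R hR => (E.hasDeriv R hR).congr heq (heq hR),
      fun R hR => S.sol.hasDeriv_toRadialDeriv hκ hh hε0 hR,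
      S.sol.continuousOn_toRadialDeriv2 hκ hh hε0, fun R hR => ?_, E.deriv_pos, ?_, ?_⟩
    · rw [heq (Ioo_subset_Icc_self hR)]
      refine (S.sol.hasDerivAt_PhiHat1 hn hε0 hR).congr_of_eventuallyEq ?_
      filter_upwards [Icc_mem_nhds hR.1 hR.2] with s hs
      rw [heq hs]
    · rw [heq hεI]
      exact E.pos ε hεI
    · rw [heq hεI, PolarSol.THat_toRadial hn w p hε0, sub_self, S.stress_eq]

end
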